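/- arXiv:1912.00135 — 3 statements merged into one kernel-verified Lean document; each statement's English description precedes it below -/
import Mathlib

section
/- Let N ≥ 1 be an integer, q ∈ (1, ∞), and r ∈ (N, ∞) with q ≤ r. Then there exists a constant C = C(N, q, r) > 0 such that for every ε > 0, every measurable function a : ℝ^N → ℂ with ∫_{ℝ^N_+} |a|^r dx < ∞, and every continuously differentiable function b : ℝ^N → ℂ such that ∫_{ℝ^N_+} |b|^q dx < ∞ and ∫_{ℝ^N_+} ‖∇b‖^q dx < ∞, one has ‖a b‖_{L^q(ℝ^N_+)} ≤ ε ‖∇b‖_{L^q(ℝ^N_+)} + C ε^{−N/(r−N)} ‖a‖_{L^r(ℝ^N_+)}^{r/(r−N)} ‖b‖_{L^q(ℝ^N_+)}. -/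
open Real MeasureTheory

/-- The `L^p` norm (real exponent `p`) of `f` with respect to the measure `μ`. -/
noncomputable def LqNorm {α : Type*} [MeasurableSpace α] {E : Type*} [NormedAddCommGroup E]
    (μ : Measure α) (p : ℝ) (f : α → E) : ℝ :=
  (∫ x, ‖f x‖ ^ p ∂μ) ^ (1 / p)

/-- The open upper half-space `ℝ^N_+ = {x : x_N > 0}`. -/
def upperHalf (N : ℕ) (hN : 1 ≤ N) : Set (EuclideanSpace ℝ (Fin N)) :=
  {x | 0 < x ⟨N - 1, by omega⟩}

open scoped ENNReal

lemma aux_jensen {α : Type*} [MeasurableSpace α] (μ : Measure α) {p : ℝ} (hp : 0 ≤ p) (hp1 : p ≤ 1)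
    {f : α → ℝ≥0∞} (hf : AEMeasurable f μ) :
    ∫⁻ x, f x ^ p ∂μ ≤ (∫⁻ x, f x ∂μ) ^ p * μ Set.univ ^ (1 - p) := by
  have := ENNReal.lintegral_mul_norm_pow_le (μ := μ) (f := f) (g := fun _ => 1) hf aemeasurable_const
    hp (sub_nonneg.2 hp1) (by ring)
  simpa using this

lemma aux_wjensen {α : Type*} [MeasurableSpace α] (μ : Measure α) {q : ℝ} (hq : 1 ≤ q)
    {w g : α → ℝ≥0∞} (hw : AEMeasurable w μ) (hg : AEMeasurable g μ) :
    (∫⁻ x, w x * g x ∂μ) ^ q ≤ (∫⁻ x, w x ∂μ) ^ (q - 1) * ∫⁻ x, w x * g x ^ q ∂μ := by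
  have hq0 : 0 < q := by linarith
  have h1 : 1 / q ≤ 1 := by rw [div_le_one hq0]; exact hq
  have := ENNReal.lintegral_mul_norm_pow_le (μ := μ) (f := fun x => w x * g x ^ q) (g := w)
    (hw.mul (hg.pow_const q)) hw (p := 1 / q) (q := 1 - 1 / q) (by positivity)
    (sub_nonneg.2 h1) (by ring)
  have e : ∀ x, (w x * g x ^ q) ^ (1 / q) * w x ^ (1 - 1 / q) = w x * g x := by
    intro x
    rw [ENNReal.mul_rpow_of_nonneg _ _ (by positivity), ← ENNReal.rpow_mul, mul_one_div_cancel hq0.ne',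
      ENNReal.rpow_one, mul_right_comm, ← ENNReal.rpow_add_of_nonneg _ _ (by positivity) (sub_nonneg.2 h1)]
    simp
  simp_rw [e] at this
  calc _ ≤ _ := ENNReal.rpow_le_rpow this hq0.le
    _ = _ := by
      rw [ENNReal.mul_rpow_of_nonneg _ _ hq0.le, ← ENNReal.rpow_mul, ← ENNReal.rpow_mul,
        one_div_mul_cancel hq0.ne', ENNReal.rpow_one, mul_comm, sub_mul, one_div_mul_cancel hq0.ne', one_mul]

lemma aux_minkowski {α : Type*} [MeasurableSpace α] (μ : Measure α) [SFinite μ] {q β : ℝ} (hq : 1 ≤ q)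
    {J : ℝ → α → ℝ≥0∞} (hJ : Measurable (Function.uncurry J)) (K : ℝ≥0∞)
    (h : ∀ s ∈ Set.Ioc (0:ℝ) 1, ∫⁻ x, J s x ^ q ∂μ ≤ (K * ENNReal.ofReal s ^ (-β)) ^ q) :
    ∫⁻ x, (∫⁻ s in Set.Ioc (0:ℝ) 1, J s x) ^ q ∂μ
      ≤ (K * ∫⁻ s in Set.Ioc (0:ℝ) 1, ENNReal.ofReal s ^ (-β)) ^ q := by
  have hq0 : 0 < q := by linarith
  set w : ℝ → ℝ≥0∞ := fun s => ENNReal.ofReal s ^ (-β) with hw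
  set v : ℝ → ℝ≥0∞ := fun s => ENNReal.ofReal s ^ β with hv
  have hwm : Measurable w := by fun_prop
  have hvm : Measurable v := by fun_prop
  have hwv : ∀ s ∈ Set.Ioc (0:ℝ) 1, v s * w s = 1 := by
    intro s hs
    simp only [hw, hv]
    rw [← ENNReal.rpow_add _ _ (by simpa using hs.1) ENNReal.ofReal_ne_top]; simp
  set M := ∫⁻ s in Set.Ioc (0:ℝ) 1, w s with hM
  have hJ2 : ∀ x, Measurable (fun s => J s x) := fun x => hJ.comp (measurable_id.prodMk measurable_const)
  have hJ1 : ∀ s, Measurable (J s) := fun s => hJ.comp (measurable_const.prodMk measurable_id)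
  have step : ∀ x, (∫⁻ s in Set.Ioc (0:ℝ) 1, J s x) ^ q ≤
      M ^ (q - 1) * ∫⁻ s in Set.Ioc (0:ℝ) 1, w s * (v s * J s x) ^ q := by
    intro x
    have := aux_wjensen (volume.restrict (Set.Ioc (0:ℝ) 1)) hq (w := w) (g := fun s => v s * J s x)
      hwm.aemeasurable (hvm.mul (hJ2 x)).aemeasurable
    refine le_trans (le_of_eq ?_) this
    congr 1
    refine setLIntegral_congr_fun measurableSet_Ioc ?_
    intro s hs
    simp only
    rw [← mul_assoc, mul_comm (w s), hwv s hs, one_mul]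
  have hjm : Measurable (Function.uncurry fun (x : α) (s : ℝ) => w s * (v s * J s x) ^ q) := by
    have : Measurable (fun p : α × ℝ => J p.2 p.1) := hJ.comp measurable_swap
    unfold Function.uncurry
    exact (hwm.comp measurable_snd).mul (((hvm.comp measurable_snd).mul this).pow_const q)
  calc _ ≤ ∫⁻ x, M ^ (q - 1) * (∫⁻ s in Set.Ioc (0:ℝ) 1, w s * (v s * J s x) ^ q) ∂μ := lintegral_mono step
    _ = M ^ (q - 1) * ∫⁻ x, (∫⁻ s in Set.Ioc (0:ℝ) 1, w s * (v s * J s x) ^ q) ∂μ := by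
        rw [lintegral_const_mul _ hjm.lintegral_prod_right]
    _ = M ^ (q - 1) * ∫⁻ s in Set.Ioc (0:ℝ) 1, ∫⁻ x, w s * (v s * J s x) ^ q ∂μ := by
        rw [lintegral_lintegral_swap hjm.aemeasurable]
    _ ≤ M ^ (q - 1) * ∫⁻ s in Set.Ioc (0:ℝ) 1, K ^ q * w s := by
        gcongr 1
        refine setLIntegral_mono (by fun_prop) ?_
        intro s hs
        simp_rw [ENNReal.mul_rpow_of_nonneg _ _ hq0.le]
        rw [lintegral_const_mul _ (by have := hJ1 s; fun_prop), lintegral_const_mul _ (by have := hJ1 s; fun_prop)]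
        calc w s * (v s ^ q * ∫⁻ x, J s x ^ q ∂μ) ≤ w s * (v s ^ q * (K * w s) ^ q) := by
              gcongr; exact h s hs
          _ = K ^ q * w s := by
              rw [← ENNReal.mul_rpow_of_nonneg _ _ hq0.le, mul_left_comm, hwv s hs, mul_one, mul_comm]
    _ = K ^ q * (M ^ (q - 1) * M ^ (1:ℝ)) := by
        rw [lintegral_const_mul _ hwm, ENNReal.rpow_one]; ring
    _ = _ := by
        rw [← ENNReal.rpow_add_of_nonneg _ _ (by linarith) (by norm_num), ENNReal.mul_rpow_of_nonneg _ _ hq0.le]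
        simp

section
variable {N : ℕ}

lemma aux_K {q r : ℝ} (hq : 1 ≤ q) (hqr : q ≤ r) {B : Set (EuclideanSpace ℝ (Fin N))}
    {A F : EuclideanSpace ℝ (Fin N) → ℝ≥0∞} (hA : Measurable A) (hF : Measurable F)
    {t : ℝ} (ht : 0 < t) :
    ∫⁻ x, (A x * ∫⁻ z in B, F (x + t • z)) ^ q ≤
      (volume B ^ (1 - 1 / r) * (∫⁻ x, A x ^ r) ^ (1 / r) * (∫⁻ x, F x ^ q) ^ (1 / q)
        * ENNReal.ofReal t ^ (-((N : ℝ) / r))) ^ q := by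
  have hq0 : 0 < q := by linarith
  have hr0 : 0 < r := by linarith
  set V := volume B with hV
  have hAr : ∀ y, ∫⁻ z in B, A (y - t • z) ^ r ≤ ENNReal.ofReal t ^ (-(N : ℝ)) * ∫⁻ x, A x ^ r := by
    intro y
    calc _ ≤ ∫⁻ z, A (y - t • z) ^ r := setLIntegral_le_lintegral _ _
      _ = ∫⁻ z, A (y - z) ^ r ∂(Measure.map (t • ·) volume) := by
          rw [lintegral_map (by fun_prop) (by fun_prop)]
      _ = ENNReal.ofReal t ^ (-(N : ℝ)) * ∫⁻ z, A (y - z) ^ r := by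
          rw [Measure.map_addHaar_smul _ ht.ne', lintegral_smul_measure, smul_eq_mul]
          congr 1
          rw [finrank_euclideanSpace, Fintype.card_fin, abs_of_pos (by positivity), ENNReal.rpow_neg,
            ENNReal.rpow_natCast, ENNReal.ofReal_inv_of_pos (by positivity), ENNReal.ofReal_pow ht.le]
      _ = _ := by
          rw [lintegral_sub_left_eq_self (fun z => A z ^ r) y]
  have hAq : ∀ y, ∫⁻ z in B, A (y - t • z) ^ q ≤
      (ENNReal.ofReal t ^ (-(N : ℝ)) * ∫⁻ x, A x ^ r) ^ (q / r) * V ^ (1 - q / r) := by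
    intro y
    have := aux_jensen (volume.restrict B) (p := q / r) (by positivity) ((div_le_one hr0).2 hqr)
      (f := fun z => A (y - t • z) ^ r) (by fun_prop)
    simp only [← ENNReal.rpow_mul, mul_div_cancel₀ _ hr0.ne', Measure.restrict_apply_univ] at this
    refine this.trans ?_
    gcongr
    exact hAr y
  have e1 : ∀ x, (A x * ∫⁻ z in B, F (x + t • z)) ^ q ≤
      V ^ (q - 1) * ∫⁻ z in B, A x ^ q * F (x + t • z) ^ q := by
    intro x
    have := aux_wjensen (volume.restrict B) hq (w := fun _ => 1) (g := fun z => F (x + t • z))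
      (by fun_prop) (by fun_prop)
    simp only [one_mul, lintegral_one, Measure.restrict_apply_univ] at this
    rw [ENNReal.mul_rpow_of_nonneg _ _ hq0.le, lintegral_const_mul _ (by fun_prop), mul_left_comm]
    gcongr
  calc _ ≤ ∫⁻ x, V ^ (q - 1) * ∫⁻ z in B, A x ^ q * F (x + t • z) ^ q := lintegral_mono e1
    _ = V ^ (q - 1) * ∫⁻ x, ∫⁻ z in B, A x ^ q * F (x + t • z) ^ q := by
        rw [lintegral_const_mul]
        exact Measurable.lintegral_prod_right' (f := fun p : EuclideanSpace ℝ (Fin N) × EuclideanSpace ℝ (Fin N) =>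
          A p.1 ^ q * F (p.1 + t • p.2) ^ q) (by fun_prop)
    _ = V ^ (q - 1) * ∫⁻ z in B, ∫⁻ x, A x ^ q * F (x + t • z) ^ q := by
        rw [lintegral_lintegral_swap]
        exact Measurable.aemeasurable (by unfold Function.uncurry; fun_prop)
    _ = V ^ (q - 1) * ∫⁻ z in B, ∫⁻ y, F y ^ q * A (y - t • z) ^ q := by
        congr 2 with z
        rw [← lintegral_add_right_eq_self (fun y => F y ^ q * A (y - t • z) ^ q) (t • z)]
        simp [mul_comm]
    _ = V ^ (q - 1) * ∫⁻ y, F y ^ q * ∫⁻ z in B, A (y - t • z) ^ q := by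
        rw [lintegral_lintegral_swap]
        · congr 2 with y
          rw [lintegral_const_mul _ (by fun_prop)]
        · exact Measurable.aemeasurable (by unfold Function.uncurry; fun_prop)
    _ ≤ V ^ (q - 1) * ∫⁻ y, F y ^ q * ((ENNReal.ofReal t ^ (-(N : ℝ)) * ∫⁻ x, A x ^ r) ^ (q / r) * V ^ (1 - q / r)) := by
        gcongr with y
        exact hAq y
    _ = _ := by
        rw [lintegral_mul_const _ (by fun_prop)]
        have h1r : 0 ≤ 1 - q / r := sub_nonneg.2 ((div_le_one hr0).2 hqr)
        simp only [ENNReal.mul_rpow_of_nonneg _ _ hq0.le, ENNReal.mul_rpow_of_nonneg _ _ (show 0 ≤ q / r by positivity),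
          ← ENNReal.rpow_mul]
        have e : V ^ ((1 - 1 / r) * q) = V ^ (q - 1) * V ^ (1 - q / r) := by
          rw [← ENNReal.rpow_add_of_nonneg _ _ (by linarith) h1r]
          congr 1; ring
        rw [e, one_div_mul_cancel hq0.ne', ENNReal.rpow_one,
          show -(N:ℝ) * (q / r) = -((N:ℝ)/r) * q by ring, show 1 / r * q = q / r by ring]
        ring

lemma aux_ftc {b : EuclideanSpace ℝ (Fin N) → ℂ} (hb : ContDiff ℝ 1 b) (x v : EuclideanSpace ℝ (Fin N)) :
    ‖b x‖ₑ ≤ ‖b (x + v)‖ₑ + ‖v‖ₑ * ∫⁻ s in Set.Ioc (0:ℝ) 1, ‖fderiv ℝ b (x + s • v)‖ₑ := by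
  have hc : Continuous (fun s : ℝ => fderiv ℝ b (x + s • v)) :=
    (hb.continuous_fderiv one_ne_zero).comp (by fun_prop)
  have hd : ∀ s ∈ Set.uIcc (0:ℝ) 1, HasDerivAt (fun s : ℝ => b (x + s • v)) (fderiv ℝ b (x + s • v) v) s := by
    intro s _
    have h1 := (hb.differentiable one_ne_zero (x + s • v)).hasFDerivAt
    have h2 : HasDerivAt (fun s : ℝ => x + s • v) v s := by
      simpa using ((hasDerivAt_id s).smul_const v).const_add x
    exact h1.comp_hasDerivAt s h2
  have := intervalIntegral.integral_eq_sub_of_hasDerivAt hd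
    ((hc.clm_apply continuous_const).intervalIntegrable _ _)
  simp only [one_smul, zero_smul, add_zero] at this
  have e : b x = b (x + v) - ∫ s in (0:ℝ)..1, fderiv ℝ b (x + s • v) v := by rw [this]; ring
  rw [e, intervalIntegral.integral_of_le zero_le_one]
  refine (enorm_sub_le).trans ?_
  gcongr
  refine (enorm_integral_le_lintegral_enorm _).trans ?_
  rw [← lintegral_const_mul _ hc.enorm.measurable]
  refine lintegral_mono fun s => ?_
  rw [mul_comm]
  exact ContinuousLinearMap.le_opENorm _ _

lemma aux_main {q r : ℝ} (hq : 1 ≤ q) (hqr : q ≤ r) {H B : Set (EuclideanSpace ℝ (Fin N))}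
    (hH : MeasurableSet H) (hB : MeasurableSet B) (hB1 : ∀ z ∈ B, ‖z‖ ≤ 1)
    (hHB : ∀ x ∈ H, ∀ z ∈ B, ∀ t : ℝ, 0 < t → x + t • z ∈ H)
    {a b : EuclideanSpace ℝ (Fin N) → ℂ} (ha : Measurable a) (hb : ContDiff ℝ 1 b) {h : ℝ} (hh : 0 < h) :
    volume B * (∫⁻ x in H, ‖a x * b x‖ₑ ^ q) ^ (1 / q) ≤
      volume B ^ (1 - 1 / r) * (∫⁻ x in H, ‖a x‖ₑ ^ r) ^ (1 / r) * ENNReal.ofReal h ^ (-((N : ℝ) / r)) *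
        ((∫⁻ x in H, ‖b x‖ₑ ^ q) ^ (1 / q) + ENNReal.ofReal h *
          (∫⁻ s in Set.Ioc (0:ℝ) 1, ENNReal.ofReal s ^ (-((N : ℝ) / r))) *
          (∫⁻ x in H, ‖fderiv ℝ b x‖ₑ ^ q) ^ (1 / q)) := by
  have hq0 : 0 < q := by linarith
  have hr0 : 0 < r := by linarith
  have ind : ∀ (f : EuclideanSpace ℝ (Fin N) → ℝ≥0∞) (p : ℝ), 0 < p →
      ∫⁻ x in H, f x ^ p = ∫⁻ x, H.indicator f x ^ p := by
    intro f p hp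
    rw [← lintegral_indicator hH]
    refine lintegral_congr fun x => ?_
    by_cases hx : x ∈ H <;> simp [hx, hp]
  rw [ind (fun x => ‖a x * b x‖ₑ) q hq0, ind (fun x => ‖a x‖ₑ) r hr0, ind (fun x => ‖b x‖ₑ) q hq0,
    ind (fun x => ‖fderiv ℝ b x‖ₑ) q hq0]
  set A := H.indicator (fun x => ‖a x‖ₑ) with hAd
  set F := H.indicator (fun x => ‖b x‖ₑ) with hFd
  set G := H.indicator (fun x => ‖fderiv ℝ b x‖ₑ) with hGd
  set β := (N : ℝ) / r with hβ
  set V := volume B with hV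
  set M := ∫⁻ s in Set.Ioc (0:ℝ) 1, ENNReal.ofReal s ^ (-β) with hM
  have hA : Measurable A := ha.enorm.indicator hH
  have hF : Measurable F := hb.continuous.measurable.enorm.indicator hH
  have hG : Measurable G := (hb.continuous_fderiv one_ne_zero).enorm.measurable.indicator hH
  set J : ℝ → EuclideanSpace ℝ (Fin N) → ℝ≥0∞ := fun s x => A x * ∫⁻ z in B, G (x + (s * h) • z) with hJd
  have hJ : Measurable (Function.uncurry J) := by
    have : Measurable (fun p : ℝ × EuclideanSpace ℝ (Fin N) => ∫⁻ z in B, G (p.2 + (p.1 * h) • z)) :=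
      Measurable.lintegral_prod_right' (f := fun p : (ℝ × EuclideanSpace ℝ (Fin N)) × EuclideanSpace ℝ (Fin N) =>
        G (p.1.2 + (p.1.1 * h) • p.2)) (by fun_prop)
    exact (hA.comp measurable_snd).mul this
  have hpt : ∀ x, V * H.indicator (fun x => ‖a x * b x‖ₑ) x ≤
      ((fun x => A x * ∫⁻ z in B, F (x + h • z)) +
        (fun x => ENNReal.ofReal h * ∫⁻ s in Set.Ioc (0:ℝ) 1, J s x)) x := by
    intro x
    by_cases hx : x ∈ H
    swap
    · simp [hx]
    simp only [Pi.add_apply, Set.indicator_of_mem hx, enorm_mul]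
    have hz : ∀ z ∈ B, ‖b x‖ₑ ≤ F (x + h • z) +
        ENNReal.ofReal h * ∫⁻ s in Set.Ioc (0:ℝ) 1, G (x + (s * h) • z) := by
      intro z hz
      refine (aux_ftc hb x (h • z)).trans ?_
      have e1 : F (x + h • z) = ‖b (x + h • z)‖ₑ := Set.indicator_of_mem (hHB x hx z hz h hh) _
      rw [e1]
      have e2 : ‖h • z‖ₑ ≤ ENNReal.ofReal h := by
        rw [← ofReal_norm, norm_smul, Real.norm_of_nonneg hh.le]
        exact ENNReal.ofReal_le_ofReal (mul_le_of_le_one_right hh.le (hB1 z hz))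
      have e3 : ∫⁻ s in Set.Ioc (0:ℝ) 1, ‖fderiv ℝ b (x + s • h • z)‖ₑ =
          ∫⁻ s in Set.Ioc (0:ℝ) 1, G (x + (s * h) • z) := by
        refine setLIntegral_congr_fun measurableSet_Ioc ?_
        intro s hs
        have : G (x + (s * h) • z) = ‖fderiv ℝ b (x + (s * h) • z)‖ₑ :=
          Set.indicator_of_mem (hHB x hx z hz _ (mul_pos hs.1 hh)) _
        simp only [this, smul_smul]
      rw [e3]
      gcongr
    have hm1 : Measurable (fun z => ∫⁻ s in Set.Ioc (0:ℝ) 1, G (x + (s * h) • z)) :=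
      Measurable.lintegral_prod_right' (f := fun p : EuclideanSpace ℝ (Fin N) × ℝ =>
        G (x + (p.2 * h) • p.1)) (by fun_prop)
    have hint : V * ‖b x‖ₑ ≤ (∫⁻ z in B, F (x + h • z)) +
        ENNReal.ofReal h * ∫⁻ s in Set.Ioc (0:ℝ) 1, ∫⁻ z in B, G (x + (s * h) • z) := by
      calc V * ‖b x‖ₑ = ∫⁻ z in B, ‖b x‖ₑ := by
            rw [setLIntegral_const, mul_comm]
        _ ≤ ∫⁻ z in B, (F (x + h • z) +
              ENNReal.ofReal h * ∫⁻ s in Set.Ioc (0:ℝ) 1, G (x + (s * h) • z)) :=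
            setLIntegral_mono' hB hz
        _ = _ := by
            rw [lintegral_add_left (by fun_prop), lintegral_const_mul _ hm1, lintegral_lintegral_swap]
            exact Measurable.aemeasurable (by unfold Function.uncurry; fun_prop)
    have hm2 : Measurable (fun s : ℝ => ∫⁻ z in B, G (x + (s * h) • z)) :=
      Measurable.lintegral_prod_right' (f := fun p : ℝ × EuclideanSpace ℝ (Fin N) =>
        G (x + (p.1 * h) • p.2)) (by fun_prop)
    simp only [hJd]
    rw [lintegral_const_mul _ hm2]
    have eA : A x = ‖a x‖ₑ := Set.indicator_of_mem hx _
    rw [eA]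
    calc V * (‖a x‖ₑ * ‖b x‖ₑ) = ‖a x‖ₑ * (V * ‖b x‖ₑ) := by ring
      _ ≤ _ := by grw [hint]
      _ = _ := by ring
  have hm3 : Measurable (fun x => A x * ∫⁻ z in B, F (x + h • z)) :=
    hA.mul (Measurable.lintegral_prod_right' (f := fun p : EuclideanSpace ℝ (Fin N) × EuclideanSpace ℝ (Fin N) =>
        F (p.1 + h • p.2)) (by fun_prop))
  have hm4 : Measurable (fun x => ∫⁻ s in Set.Ioc (0:ℝ) 1, J s x) :=
    Measurable.lintegral_prod_right' (f := fun p : EuclideanSpace ℝ (Fin N) × ℝ => J p.2 p.1)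
      (hJ.comp measurable_swap)
  have root : ∀ {X Y : ℝ≥0∞}, X ≤ Y ^ q → X ^ (1 / q) ≤ Y := by
    intro X Y hXY
    have := ENNReal.rpow_le_rpow hXY (show 0 ≤ 1 / q by positivity)
    rwa [← ENNReal.rpow_mul, mul_one_div_cancel hq0.ne', ENNReal.rpow_one] at this
  have T1 := root (aux_K hq hqr (B := B) hA hF hh)
  have T2 := root (aux_minkowski volume (β := β) hq hJ
    (V ^ (1 - 1 / r) * (∫⁻ x, A x ^ r) ^ (1 / r) * (∫⁻ x, G x ^ q) ^ (1 / q) * ENNReal.ofReal h ^ (-β))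
    (by
      intro s hs
      refine (aux_K hq hqr (B := B) hA hG (mul_pos hs.1 hh)).trans (le_of_eq ?_)
      rw [ENNReal.ofReal_mul hs.1.le, ENNReal.mul_rpow_of_ne_top ENNReal.ofReal_ne_top ENNReal.ofReal_ne_top]
      congr 1
      ring))
  calc V * (∫⁻ x, H.indicator (fun x => ‖a x * b x‖ₑ) x ^ q) ^ (1 / q)
      = (∫⁻ x, (V * H.indicator (fun x => ‖a x * b x‖ₑ) x) ^ q) ^ (1 / q) := by
        simp_rw [ENNReal.mul_rpow_of_nonneg _ _ hq0.le]
        have hmi : Measurable (H.indicator (fun x => ‖a x * b x‖ₑ)) :=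
          (ha.mul hb.continuous.measurable).enorm.indicator hH
        rw [lintegral_const_mul _ (hmi.pow_const q), ENNReal.mul_rpow_of_nonneg _ _ (by positivity),
          ← ENNReal.rpow_mul, mul_one_div_cancel hq0.ne', ENNReal.rpow_one]
    _ ≤ (∫⁻ x, ((fun x => A x * ∫⁻ z in B, F (x + h • z)) +
        (fun x => ENNReal.ofReal h * ∫⁻ s in Set.Ioc (0:ℝ) 1, J s x)) x ^ q) ^ (1 / q) := by
        gcongr with x
        exact hpt x
    _ ≤ _ := ENNReal.lintegral_Lp_add_le hm3.aemeasurable (hm4.const_mul _).aemeasurable hq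
    _ = (∫⁻ x, (A x * ∫⁻ z in B, F (x + h • z)) ^ q) ^ (1 / q) +
        ENNReal.ofReal h * (∫⁻ x, (∫⁻ s in Set.Ioc (0:ℝ) 1, J s x) ^ q) ^ (1 / q) := by
        congr 1
        simp_rw [ENNReal.mul_rpow_of_nonneg _ _ hq0.le]
        rw [lintegral_const_mul _ (hm4.pow_const q), ENNReal.mul_rpow_of_nonneg _ _ (by positivity),
          ← ENNReal.rpow_mul, mul_one_div_cancel hq0.ne', ENNReal.rpow_one]
    _ ≤ _ := add_le_add T1 (mul_le_mul_right T2 _)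
    _ = _ := by ring

lemma aux_norm {α : Type*} [MeasurableSpace α] {E : Type*} [NormedAddCommGroup E]
    (μ : Measure α) {p : ℝ} (hp : 0 < p) {f : α → E} (hf : AEStronglyMeasurable f μ) :
    LqNorm μ p f = ((∫⁻ x, ‖f x‖ₑ ^ p ∂μ) ^ (1 / p)).toReal := by
  unfold LqNorm
  rw [integral_eq_lintegral_of_nonneg_ae (Filter.Eventually.of_forall fun x => by positivity)
    (hf.norm.aemeasurable.pow_const p).aestronglyMeasurable, ENNReal.toReal_rpow]
  congr 3
  ext x
  rw [← ofReal_norm, ENNReal.ofReal_rpow_of_nonneg (norm_nonneg _) hp.le]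

lemma aux_fin {α : Type*} [MeasurableSpace α] {E : Type*} [NormedAddCommGroup E]
    (μ : Measure α) {p : ℝ} (hp : 0 < p) {f : α → E} (hf : Integrable (fun x => ‖f x‖ ^ p) μ) :
    (∫⁻ x, ‖f x‖ₑ ^ p ∂μ) ^ (1 / p) ≠ ⊤ := by
  refine ENNReal.rpow_ne_top_of_nonneg (by positivity) ?_
  have := hf.lintegral_lt_top.ne
  convert this using 3 with x
  rw [← ofReal_norm, ENNReal.ofReal_rpow_of_nonneg (norm_nonneg _) hp.le]

lemma aux_M {β : ℝ} (hβ : β < 1) : ∫⁻ s in Set.Ioc (0:ℝ) 1, ENNReal.ofReal s ^ (-β) ≠ ⊤ := by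
  have h := intervalIntegral.intervalIntegrable_rpow' (a := 0) (b := 1) (r := -β) (by linarith)
  rw [intervalIntegrable_iff_integrableOn_Ioc_of_le zero_le_one] at h
  have := h.lintegral_lt_top.ne
  convert this using 1
  refine setLIntegral_congr_fun measurableSet_Ioc ?_
  intro s hs
  exact ENNReal.ofReal_rpow_of_pos hs.1

lemma aux_real {n r c m ε a' b' g' ab : ℝ} (hn : 0 < n) (hnr : n < r) (hc : 0 < c) (hm : 0 < m) (hε : 0 < ε)
    (ha : 0 ≤ a') (hb : 0 ≤ b') (hg : 0 ≤ g')
    (H : ∀ h : ℝ, 0 < h → ab ≤ c * a' * h ^ (-(n / r)) * (b' + h * m * g')) :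
    ab ≤ ε * g' + c * (c * m) ^ (n / (r - n)) * ε ^ (-n / (r - n)) * a' ^ (r / (r - n)) * b' := by
  have hrn : 0 < r - n := by linarith
  have hr : 0 < r := by linarith
  rcases ha.eq_or_lt with h0 | ha
  · have := H 1 one_pos
    rw [← h0] at this
    simp only [mul_zero, zero_mul] at this
    refine this.trans ?_
    rw [← h0]; positivity
  have hy : 0 < ε / (c * m * a') := by positivity
  set y := ε / (c * m * a') with hyd
  have := H (y ^ (r / (r - n))) (by positivity)
  refine this.trans (le_of_eq ?_)
  have e1 : (y ^ (r / (r - n))) ^ (-(n / r)) = y ^ (-n / (r - n)) := by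
    rw [← Real.rpow_mul hy.le]; congr 1; field_simp
  have e2 : y ^ (-n / (r - n)) * y ^ (r / (r - n)) = y := by
    rw [← Real.rpow_add hy, ← add_div, neg_add_eq_sub, div_self hrn.ne', Real.rpow_one]
  have e3 : y ^ (-n / (r - n)) = (c * m) ^ (n / (r - n)) * a' ^ (n / (r - n)) * ε ^ (-n / (r - n)) := by
    rw [hyd, Real.div_rpow hε.le (by positivity), neg_div, Real.rpow_neg (by positivity : 0 ≤ c * m * a'),
      Real.mul_rpow (by positivity) ha.le]
    field_simp
  have e4 : a' ^ (r / (r - n)) = a' * a' ^ (n / (r - n)) := by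
    nth_rewrite 2 [← Real.rpow_one a']
    rw [← Real.rpow_add ha]; congr 1; field_simp; ring
  rw [e1]
  calc _ = c * m * a' * (y ^ (-n / (r - n)) * y ^ (r / (r - n))) * g'
        + c * a' * y ^ (-n / (r - n)) * b' := by ring
    _ = _ := by
      rw [e2, e3, e4, hyd]
      field_simp

end

/-- Lemma 4.3: `‖ab‖_{L^q(ℝ^N_+)} ≤ ε‖∇b‖_{L^q(ℝ^N_+)}
  + C ε^{-N/(r-N)} ‖a‖_{L^r(ℝ^N_+)}^{r/(r-N)} ‖b‖_{L^q(ℝ^N_+)}`. -/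
theorem stmt_5 (N : ℕ) (hN : 1 ≤ N) (q r : ℝ) (hq1 : 1 < q) (hrN : (N : ℝ) < r)
    (hqr : q ≤ r) :
    ∃ C : ℝ, 0 < C ∧ ∀ ε : ℝ, 0 < ε →
      ∀ a : EuclideanSpace ℝ (Fin N) → ℂ, Measurable a →
        IntegrableOn (fun x => ‖a x‖ ^ r) (upperHalf N hN) volume →
      ∀ b : EuclideanSpace ℝ (Fin N) → ℂ, ContDiff ℝ 1 b →
        IntegrableOn (fun x => ‖b x‖ ^ q) (upperHalf N hN) volume →
        IntegrableOn (fun x => ‖fderiv ℝ b x‖ ^ q) (upperHalf N hN) volume →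
        LqNorm (volume.restrict (upperHalf N hN)) q (fun x => a x * b x) ≤
          ε * LqNorm (volume.restrict (upperHalf N hN)) q (fun x => fderiv ℝ b x) +
            C * ε ^ (-(N : ℝ) / (r - N)) *
              (LqNorm (volume.restrict (upperHalf N hN)) r a) ^ (r / (r - N)) *
              LqNorm (volume.restrict (upperHalf N hN)) q b := by
  have hq0 : 0 < q := by linarith
  have hr0 : 0 < r := by linarith
  have hN0 : (0:ℝ) < N := by exact_mod_cast hN
  have hHo : IsOpen (upperHalf N hN) := by
    unfold upperHalf
    exact isOpen_lt continuous_const (by fun_prop)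
  set H := upperHalf N hN with hH
  set B := H ∩ Metric.ball 0 1 with hBd
  have hBo : IsOpen B := hHo.inter Metric.isOpen_ball
  have hBne : B.Nonempty := by
    refine ⟨EuclideanSpace.single ⟨N - 1, by omega⟩ (1/2 : ℝ), ?_, ?_⟩
    · simp [hH, upperHalf]
    · rw [mem_ball_zero_iff, EuclideanSpace.norm_single]; norm_num
  have hV0 : volume B ≠ 0 := (hBo.measure_pos volume hBne).ne'
  have hVt : volume B ≠ ⊤ := (measure_mono Set.inter_subset_right |>.trans_lt measure_ball_lt_top).ne
  have hB1 : ∀ z ∈ B, ‖z‖ ≤ 1 := fun z hz => (mem_ball_zero_iff.1 hz.2).le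
  have hHB : ∀ x ∈ H, ∀ z ∈ B, ∀ t : ℝ, 0 < t → x + t • z ∈ H := by
    intro x hx z hz t ht
    have hz1 := hz.1
    simp only [hH, upperHalf, Set.mem_setOf_eq] at hx hz1 ⊢
    simp only [PiLp.add_apply, PiLp.smul_apply, smul_eq_mul]
    positivity
  set v := (volume B).toReal with hv
  have hv0 : 0 < v := ENNReal.toReal_pos hV0 hVt
  have hMt := aux_M (β := (N:ℝ) / r) ((div_lt_one hr0).2 hrN)
  set M := ∫⁻ s in Set.Ioc (0:ℝ) 1, ENNReal.ofReal s ^ (-((N:ℝ) / r)) with hM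
  set m := M.toReal + 1 with hm
  have hm0 : 0 < m := by positivity
  set c := v ^ (-(1 / r)) with hc
  have hc0 : 0 < c := by positivity
  refine ⟨c * (c * m) ^ ((N:ℝ) / (r - N)), by positivity, ?_⟩
  intro ε hε a ha hai b hb hbi hgi
  rw [aux_norm _ hq0 (f := fun x => a x * b x) (ha.mul hb.continuous.measurable).aestronglyMeasurable,
    aux_norm _ hq0 (hb.continuous_fderiv one_ne_zero).aestronglyMeasurable,
    aux_norm _ hr0 ha.aestronglyMeasurable, aux_norm _ hq0 hb.continuous.aestronglyMeasurable]
  refine aux_real hN0 hrN hc0 hm0 hε ENNReal.toReal_nonneg ENNReal.toReal_nonneg ENNReal.toReal_nonneg ?_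
  intro h hh
  have key := aux_main hq1.le hqr hHo.measurableSet hBo.measurableSet hB1 hHB ha hb hh
  have fa := aux_fin _ hr0 hai
  have fb := aux_fin _ hq0 hbi
  have fg := aux_fin _ hq0 hgi
  have hr1 : 0 ≤ 1 - 1 / r := by
    rw [sub_nonneg, div_le_one hr0]; linarith
  have ft : ENNReal.ofReal h ^ (-((N : ℝ) / r)) ≠ ⊤ := by
    rw [ENNReal.ofReal_rpow_of_pos hh]; exact ENNReal.ofReal_ne_top
  have fV : volume B ^ (1 - 1 / r) ≠ ⊤ := ENNReal.rpow_ne_top_of_nonneg hr1 hVt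
  have key2 := ENNReal.toReal_mono (ENNReal.mul_ne_top (ENNReal.mul_ne_top (ENNReal.mul_ne_top fV fa) ft)
    (ENNReal.add_ne_top.2 ⟨fb, ENNReal.mul_ne_top (ENNReal.mul_ne_top ENNReal.ofReal_ne_top hMt) fg⟩)) key
  rw [ENNReal.toReal_mul, ENNReal.toReal_mul, ENNReal.toReal_mul, ENNReal.toReal_mul,
    ENNReal.toReal_add fb (ENNReal.mul_ne_top (ENNReal.mul_ne_top ENNReal.ofReal_ne_top hMt) fg),
    ENNReal.toReal_mul, ENNReal.toReal_mul, ENNReal.toReal_ofReal hh.le, ← ENNReal.toReal_rpow (volume B),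
    ← ENNReal.toReal_rpow (ENNReal.ofReal h), ENNReal.toReal_ofReal hh.le] at key2
  generalize ((∫⁻ x in H, ‖a x * b x‖ₑ ^ q) ^ (1 / q)).toReal = ab at *
  have pa : 0 ≤ ((∫⁻ x in H, ‖a x‖ₑ ^ r) ^ (1 / r)).toReal := ENNReal.toReal_nonneg
  have pb : 0 ≤ ((∫⁻ x in H, ‖b x‖ₑ ^ q) ^ (1 / q)).toReal := ENNReal.toReal_nonneg
  have pg : 0 ≤ ((∫⁻ x in H, ‖fderiv ℝ b x‖ₑ ^ q) ^ (1 / q)).toReal := ENNReal.toReal_nonneg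
  generalize ((∫⁻ x in H, ‖a x‖ₑ ^ r) ^ (1 / r)).toReal = a' at *
  generalize ((∫⁻ x in H, ‖b x‖ₑ ^ q) ^ (1 / q)).toReal = b' at *
  generalize ((∫⁻ x in H, ‖fderiv ℝ b x‖ₑ ^ q) ^ (1 / q)).toReal = g' at *
  have ev : v ^ (1 - 1 / r) = v * c := by
    rw [hc, sub_eq_add_neg, Real.rpow_add hv0, Real.rpow_one]
  rw [← hv, ev] at key2
  have key3 : v * ab ≤ v * (c * a' * h ^ (-((N:ℝ) / r)) * (b' + h * M.toReal * g')) := by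
    refine key2.trans (le_of_eq ?_); ring
  refine (le_of_mul_le_mul_left key3 hv0).trans ?_
  have : M.toReal ≤ m := by simp [hm]
  gcongr
end

section
/- For every integer N ≥ 1 there exists a constant C > 0 with the following property: for every real R > e^e there exists a smooth function ψ_R : ℝ^N → ℝ such that 0 ≤ ψ_R(x) ≤ 1 for all x; ψ_R(x) = 1 whenever ‖x‖ ≤ exp(√(log R)); ψ_R(x) = 0 whenever ‖x‖ ≥ R; and ‖∇ψ_R(x)‖ ≤ (C / log log R) · 1/(‖x‖ · log ‖x‖) for every x with exp(√(log R)) ≤ ‖x‖ ≤ R. -/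
open Real

/-- The cut-off function of Sobolev type `ψ_R` with gradient estimate (3.12). -/
theorem stmt_6 (N : ℕ) (hN : 1 ≤ N) :
    ∃ C : ℝ, 0 < C ∧ ∀ R : ℝ, Real.exp (Real.exp 1) < R →
      ∃ ψ : EuclideanSpace ℝ (Fin N) → ℝ,
        ContDiff ℝ (⊤ : ℕ∞) ψ ∧
        (∀ x, ψ x ∈ Set.Icc (0 : ℝ) 1) ∧
        (∀ x, ‖x‖ ≤ Real.exp (Real.sqrt (Real.log R)) → ψ x = 1) ∧
        (∀ x, R ≤ ‖x‖ → ψ x = 0) ∧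
        (∀ x, Real.exp (Real.sqrt (Real.log R)) ≤ ‖x‖ → ‖x‖ ≤ R →
          ‖fderiv ℝ ψ x‖ ≤ (C / Real.log (Real.log R)) * (1 / (‖x‖ * Real.log ‖x‖))) := by
  have hS1 : ContDiff ℝ 1 smoothTransition := smoothTransition.contDiff (n := 1)
  have hc : Continuous (deriv smoothTransition) := hS1.continuous_deriv le_rfl
  obtain ⟨M, hM⟩ := (isCompact_Icc (a := (0:ℝ)) (b := 1)).exists_bound_of_continuousOn
    hc.continuousOn
  have hM0 : 0 ≤ M := (norm_nonneg _).trans (hM 0 (by simp))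
  refine ⟨2 * M + 1, by linarith, fun R hR => ?_⟩
  have hR0 : 0 < R := (exp_pos _).trans hR
  have hlR : exp 1 < log R := (lt_log_iff_exp_lt hR0).2 hR
  have hlR0 : 0 < log R := (exp_pos _).trans hlR
  have hL : 1 < log (log R) := (lt_log_iff_exp_lt hlR0).2 hlR
  set L := log (log R) with hLdef
  set ρ := exp (√(log R)) with hρ
  have hs0 : 0 < √(log R) := sqrt_pos.2 hlR0
  have hρ1 : 1 < ρ := one_lt_exp_iff.2 hs0
  have hlogs : log (√(log R)) = L / 2 := log_sqrt hlR0.le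
  have hs1 : √(log R) < log R := by
    rw [← log_lt_log_iff hs0 hlR0, hlogs]; linarith
  have hρR : ρ < R := (lt_log_iff_exp_lt hR0).1 hs1
  let g : ℝ → ℝ := fun r => 2 - 2 / L * log (log r)
  let F : EuclideanSpace ℝ (Fin N) → ℝ := fun x => smoothTransition (g ‖x‖)
  have hg1 : ∀ r, 1 < r → r ≤ ρ → 1 ≤ g r := by
    intro r h1 h2
    have h3 : log (log r) ≤ L / 2 := by
      rw [← hlogs]
      exact log_le_log (log_pos h1) ((log_le_iff_le_exp (by linarith)).2 h2)
    have : 2 / L * log (log r) ≤ 2 / L * (L / 2) := by gcongr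
    have h4 : 2 / L * (L / 2) = 1 := by field_simp
    simp only [g]; linarith
  have hg1' : ∀ r, ρ ≤ r → g r ≤ 1 := by
    intro r h2
    have h3 : L / 2 ≤ log (log r) := by
      rw [← hlogs]
      exact log_le_log hs0 ((le_log_iff_exp_le (by linarith)).2 h2)
    have : 2 / L * (L / 2) ≤ 2 / L * log (log r) := by gcongr
    have h4 : 2 / L * (L / 2) = 1 := by field_simp
    simp only [g]; linarith
  have hg0 : ∀ r, R ≤ r → g r ≤ 0 := by
    intro r h2
    have h3 : L ≤ log (log r) := log_le_log hlR0 (log_le_log hR0 h2)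
    have : 2 / L * L ≤ 2 / L * log (log r) := by gcongr
    have h4 : 2 / L * L = 2 := by field_simp
    simp only [g]; linarith
  have hg0' : ∀ r, 1 < r → r ≤ R → 0 ≤ g r := by
    intro r h1 h2
    have h3 : log (log r) ≤ L := log_le_log (log_pos h1) (log_le_log (by linarith) h2)
    have : 2 / L * log (log r) ≤ 2 / L * L := by gcongr
    have h4 : 2 / L * L = 2 := by field_simp
    simp only [g]; linarith
  let ψ : EuclideanSpace ℝ (Fin N) → ℝ := fun x => if ‖x‖ ≤ ρ then 1 else F x
  have hψF : ∀ x, 1 < ‖x‖ → ψ x = F x := by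
    intro x hx
    by_cases h : ‖x‖ ≤ ρ
    · simp only [ψ, F, h, if_true]
      exact (smoothTransition.one_of_one_le (hg1 _ hx h)).symm
    · simp [ψ, h]
  have hev : ∀ x, 1 < ‖x‖ → ψ =ᶠ[nhds x] F := by
    intro x hx
    filter_upwards [(isOpen_lt continuous_const continuous_norm).mem_nhds hx] with y hy
    exact hψF y hy
  refine ⟨ψ, ?_, ?_, ?_, ?_, ?_⟩
  · rw [contDiff_iff_contDiffAt]
    intro x
    by_cases hx : ‖x‖ < ρ
    · have : ψ =ᶠ[nhds x] fun _ => (1:ℝ) := by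
        filter_upwards [(isOpen_lt continuous_norm continuous_const).mem_nhds hx] with y hy
        have hy' : ‖y‖ < ρ := hy
        simp [ψ, hy'.le]
      exact contDiffAt_const.congr_of_eventuallyEq this
    · have hx1 : 1 < ‖x‖ := by linarith [not_lt.1 hx]
      refine ContDiffAt.congr_of_eventuallyEq ?_ (hev x hx1)
      have hx0 : x ≠ 0 := by rintro rfl; simp at hx1; linarith
      have h1 : ContDiffAt ℝ (⊤ : ℕ∞) (fun y : EuclideanSpace ℝ (Fin N) => ‖y‖) x :=
        contDiffAt_norm ℝ hx0
      have h2 := (h1.log (by positivity)).log (log_pos hx1).ne'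
      exact (smoothTransition.contDiffAt).comp x (contDiffAt_const.sub (contDiffAt_const.mul h2))
  · intro x
    by_cases h : ‖x‖ ≤ ρ
    · simp [ψ, h]
    · simp only [ψ, h, if_false, F]
      exact ⟨smoothTransition.nonneg _, smoothTransition.le_one _⟩
  · intro x hx
    simp [ψ, hx]
  · intro x hx
    rw [hψF x (by linarith)]
    exact smoothTransition.zero_of_nonpos (hg0 _ hx)
  · intro x hx hxR
    have hx1 : 1 < ‖x‖ := by linarith
    have hx0 : x ≠ 0 := by rintro rfl; simp at hx1; linarith
    have hl : 0 < log ‖x‖ := log_pos hx1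
    rw [(hev x hx1).fderiv_eq]
    have hn : HasFDerivAt (fun y : EuclideanSpace ℝ (Fin N) => ‖y‖) _ x :=
      ((contDiffAt_norm ℝ hx0 (n := 1)).differentiableAt (by simp)).hasFDerivAt
    have hn1 : ‖fderiv ℝ (fun y : EuclideanSpace ℝ (Fin N) => ‖y‖) x‖ ≤ 1 := by
      simpa using norm_fderiv_le_of_lipschitz ℝ
        (lipschitzWith_one_norm (E := EuclideanSpace ℝ (Fin N))) (x₀ := x)
    have hgd : HasDerivAt g (-(2 / L * (‖x‖⁻¹ / log ‖x‖))) ‖x‖ :=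
      ((((hasDerivAt_log (by positivity)).log hl.ne').const_mul (2 / L)).const_sub 2)
    have hSd : HasDerivAt smoothTransition (deriv smoothTransition (g ‖x‖)) (g ‖x‖) :=
      (hS1.differentiable (by simp) _).hasDerivAt
    have hF := (hSd.comp ‖x‖ hgd).comp_hasFDerivAt x hn
    have hFe : fderiv ℝ F x = _ := hF.fderiv
    rw [hFe, norm_smul, norm_mul, norm_neg]
    have hb := hM (g ‖x‖) ⟨hg0' _ hx1 hxR, hg1' _ hx⟩
    have hp : 0 ≤ 2 / L * (‖x‖⁻¹ / log ‖x‖) := by positivity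
    rw [Real.norm_of_nonneg hp]
    calc _ ≤ M * (2 / L * (‖x‖⁻¹ / log ‖x‖)) * 1 := by gcongr
      _ = (2 * M / L) * (1 / (‖x‖ * log ‖x‖)) := by field_simp
      _ ≤ _ := by gcongr; linarith
end

section
/- Let N ≥ 1 be an integer and q ∈ (1, ∞). Define d_q : ℝ^N → ℝ by d_q(x) = (1 + ‖x‖²)^{1/2} if q ≠ N, and d_q(x) = (1 + ‖x‖²)^{1/2} · log((2 + ‖x‖²)^{1/2}) if q = N. Then there exists a constant C = C(N, q) > 0 such that for every continuously differentiable function u : ℝ^N → ℂ with ∫_{ℝ^N} ‖∇u‖^q dx < ∞, there exists a constant c ∈ ℂ with ∫_{ℝ^N} |u(x) − c|^q / d_q(x)^q dx ≤ C^q ∫_{ℝ^N} ‖∇u(x)‖^q dx. -/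
open Real MeasureTheory
open scoped ENNReal

lemma hoelder_w {α : Type*} [MeasurableSpace α] (μ : Measure α) (q : ℝ) (hq : 1 < q) (w : α → ℝ)
    (hw : Measurable w) (hpos : ∀ᵐ s ∂μ, 0 < w s) (f : α → ℝ≥0∞) (hf : AEMeasurable f μ) :
    (∫⁻ s, f s ∂μ) ^ q ≤ (∫⁻ s, ENNReal.ofReal (w s ^ (-1/(q-1))) ∂μ) ^ (q-1) *
      ∫⁻ s, ENNReal.ofReal (w s) * f s ^ q ∂μ := by
  have hq0 : 0 < q := by linarith
  have hq1 : 0 < q - 1 := by linarith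
  have hpq : (q.conjExponent).HolderConjugate q := (Real.HolderConjugate.conjExponent hq).symm
  have h := ENNReal.lintegral_mul_le_Lp_mul_Lq μ hpq
    (f := fun s => ENNReal.ofReal (w s ^ (-1/q))) (g := fun s => ENNReal.ofReal (w s ^ (1/q)) * f s)
    (by fun_prop) (by fun_prop)
  have e1 : ∫⁻ s, f s ∂μ = ∫⁻ a, ((fun s => ENNReal.ofReal (w s ^ (-1/q))) *
      (fun s => ENNReal.ofReal (w s ^ (1/q)) * f s)) a ∂μ := by
    apply lintegral_congr_ae
    filter_upwards [hpos] with s hs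
    simp only [Pi.mul_apply]
    rw [← mul_assoc, ← ENNReal.ofReal_mul (by positivity), ← Real.rpow_add hs]
    have : -1/q + 1/q = 0 := by ring
    rw [this]; simp
  have e2 : ∫⁻ s, (ENNReal.ofReal (w s ^ (-1/q))) ^ q.conjExponent ∂μ =
      ∫⁻ s, ENNReal.ofReal (w s ^ (-1/(q-1))) ∂μ := by
    apply lintegral_congr_ae
    filter_upwards [hpos] with s hs
    rw [ENNReal.ofReal_rpow_of_pos (by positivity), ← Real.rpow_mul hs.le]
    congr 2
    unfold Real.conjExponent
    field_simp
  have e3 : ∫⁻ s, (ENNReal.ofReal (w s ^ (1/q)) * f s) ^ q ∂μ =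
      ∫⁻ s, ENNReal.ofReal (w s) * f s ^ q ∂μ := by
    apply lintegral_congr_ae
    filter_upwards [hpos] with s hs
    rw [ENNReal.mul_rpow_of_nonneg _ _ hq0.le, ENNReal.ofReal_rpow_of_pos (by positivity),
      ← Real.rpow_mul hs.le]
    have : 1/q*q = 1 := by field_simp
    rw [this, Real.rpow_one]
  rw [← e1, e2, e3] at h
  calc _ ≤ _ := ENNReal.rpow_le_rpow h hq0.le
    _ = _ := by
      rw [ENNReal.mul_rpow_of_nonneg _ _ hq0.le, ← ENNReal.rpow_mul, ← ENNReal.rpow_mul]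
      have h1 : 1/q*q = 1 := by field_simp
      have h2 : 1/q.conjExponent*q = q-1 := by unfold Real.conjExponent; field_simp
      rw [h1, h2, ENNReal.rpow_one]

lemma ftc_ray {E : Type*} [NormedAddCommGroup E] [NormedSpace ℝ E] (v : E → ℂ) (hv : ContDiff ℝ 1 v) (σ : ℝ) (hσ : |σ| = 1) (S : ℝ) (hS : 0 ≤ S) (x : E) :
    ‖v (rexp (σ * S) • x) - v x‖ₑ ≤ ‖x‖ₑ * ∫⁻ s in Set.Ioc 0 S,
      ENNReal.ofReal (rexp (σ * s)) * ‖fderiv ℝ v (rexp (σ * s) • x)‖ₑ := by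
  have hc : Continuous (fderiv ℝ v) := hv.continuous_fderiv (by norm_num)
  have hd : ∀ s ∈ Set.uIcc 0 S, HasDerivAt (fun s => v (rexp (σ * s) • x))
      (fderiv ℝ v (rexp (σ * s) • x) ((rexp (σ * s) * σ) • x)) s := by
    intro s _
    have h1 : HasDerivAt (fun s => rexp (σ * s) • x) ((rexp (σ * s) * σ) • x) s := by
      have := ((hasDerivAt_id s).const_mul σ).exp
      simp only [id, mul_one] at this
      exact this.smul_const x
    exact ((hv.differentiable (by norm_num)) _).hasFDerivAt.comp_hasDerivAt s h1
  have h := intervalIntegral.integral_eq_sub_of_hasDerivAt hd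
    (Continuous.intervalIntegrable (by fun_prop) _ _)
  simp only [mul_zero, Real.exp_zero, one_smul] at h
  rw [← h, intervalIntegral.integral_of_le hS]
  refine (enorm_integral_le_lintegral_enorm _).trans ?_
  rw [← lintegral_const_mul' _ _ (by simp)]
  apply lintegral_mono
  intro s
  refine (ContinuousLinearMap.le_opENorm _ _).trans ?_
  rw [enorm_smul, enorm_mul]
  have : ‖σ‖ₑ = 1 := by
    rw [← ofReal_norm, Real.norm_eq_abs, hσ]; simp
  rw [this, mul_one, Real.enorm_eq_ofReal (Real.exp_pos _).le]
  apply le_of_eq; ring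

section
variable {E : Type*} [NormedAddCommGroup E] [NormedSpace ℝ E] [MeasurableSpace E] [BorelSpace E]
  [FiniteDimensional ℝ E] (μ : Measure E) [μ.IsAddHaarMeasure]

lemma scale_lint (r : ℝ) (hr : 0 < r) (f : E → ℝ≥0∞) (hf : Measurable f) :
    ∫⁻ x, f (r • x) ∂μ = ENNReal.ofReal ((r ^ Module.finrank ℝ E)⁻¹) * ∫⁻ x, f x ∂μ := by
  have := Measure.map_addHaar_smul μ hr.ne'
  rw [← lintegral_map hf (measurable_const_smul r), this, lintegral_smul_measure,
    abs_of_pos (by positivity)]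
  rfl

lemma scale_exp (a : ℝ) (f : E → ℝ≥0∞) (hf : Measurable f) :
    ∫⁻ x, f (rexp a • x) ∂μ =
      ENNReal.ofReal (rexp (-(a * Module.finrank ℝ E))) * ∫⁻ x, f x ∂μ := by
  rw [scale_lint μ _ (Real.exp_pos _) f hf, ← Real.exp_nat_mul, ← Real.exp_neg, mul_comm a]

lemma lint_exp_lt_top (a : ℝ) (ha : a < 0) :
    ∫⁻ s in Set.Ioi (0:ℝ), ENNReal.ofReal (rexp (a * s)) < ∞ :=
  (integrableOn_exp_mul_Ioi ha 0).lintegral_lt_top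

lemma hardyA (q : ℝ) (hq : 1 < q) (σ : ℝ) (hσ : 0 < σ * (Module.finrank ℝ E - q)) :
    ∃ K : ℝ≥0∞, K ≠ ∞ ∧ ∀ g : E → ℝ≥0∞, Measurable g →
      ∫⁻ x, (∫⁻ s in Set.Ioi (0:ℝ), ENNReal.ofReal (rexp (σ * s)) * g (rexp (σ * s) • x)) ^ q ∂μ
        ≤ K * ∫⁻ x, g x ^ q ∂μ := by
  set δ := σ * (Module.finrank ℝ E - q) with hδ
  have hq0 : 0 < q := by linarith
  have hq1 : 0 < q - 1 := by linarith
  set A := ∫⁻ s in Set.Ioi (0:ℝ), ENNReal.ofReal (rexp (δ / 2 * s) ^ (-1/(q-1))) with hA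
  set B := ∫⁻ s in Set.Ioi (0:ℝ), ENNReal.ofReal (rexp (-(δ / 2) * s)) with hB
  have hAt : A < ∞ := by
    have : A = ∫⁻ s in Set.Ioi (0:ℝ), ENNReal.ofReal (rexp ((-(δ/2/(q-1))) * s)) := by
      rw [hA]
      congr with s
      rw [← Real.exp_mul]
      congr 2
      field_simp
    rw [this]
    apply lint_exp_lt_top
    have : 0 < δ/2/(q-1) := by positivity
    linarith
  have hBt : B < ∞ := lint_exp_lt_top _ (by linarith)
  refine ⟨A ^ (q-1) * B, ENNReal.mul_ne_top (ENNReal.rpow_ne_top_of_nonneg hq1.le hAt.ne) hBt.ne, ?_⟩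
  intro g hg
  calc _ ≤ ∫⁻ x, A ^ (q-1) * (∫⁻ s in Set.Ioi (0:ℝ), ENNReal.ofReal (rexp (δ / 2 * s)) *
        (ENNReal.ofReal (rexp (σ * s)) * g (rexp (σ * s) • x)) ^ q) ∂μ := by
        apply lintegral_mono
        intro x
        apply hoelder_w _ q hq (fun s => rexp (δ / 2 * s)) (by fun_prop)
        · exact Filter.Eventually.of_forall fun s => Real.exp_pos _
        · fun_prop
    _ = A ^ (q-1) * ∫⁻ s in Set.Ioi (0:ℝ), ∫⁻ x, ENNReal.ofReal (rexp (δ / 2 * s)) *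
        (ENNReal.ofReal (rexp (σ * s)) * g (rexp (σ * s) • x)) ^ q ∂μ := by
        rw [lintegral_const_mul', lintegral_lintegral_swap]
        · apply Measurable.aemeasurable
          fun_prop
        · exact ENNReal.rpow_ne_top_of_nonneg hq1.le hAt.ne
    _ = A ^ (q-1) * ∫⁻ s in Set.Ioi (0:ℝ), ENNReal.ofReal (rexp (-(δ / 2) * s)) *
        ∫⁻ x, g x ^ q ∂μ := by
        congr with s
        rw [lintegral_const_mul _ (by fun_prop)]
        simp_rw [ENNReal.mul_rpow_of_nonneg _ _ hq0.le]
        rw [lintegral_const_mul _ (by fun_prop), scale_exp μ (σ * s) (fun x => g x ^ q) (by fun_prop),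
          ENNReal.ofReal_rpow_of_pos (Real.exp_pos _), ← mul_assoc, ← mul_assoc,
          ← ENNReal.ofReal_mul (by positivity), ← ENNReal.ofReal_mul (by positivity),
          ← Real.exp_mul, ← Real.exp_add, ← Real.exp_add]
        congr 3
        rw [hδ]; ring
    _ = _ := by
        rw [lintegral_mul_const _ (by fun_prop), mul_assoc]


end

lemma lint_shift (b a : ℝ) (hb : 0 < b) (ha : 0 < a) :
    ∫⁻ s in Set.Ioi (0:ℝ), ENNReal.ofReal ((a + s) ^ (-1-b)) = ENNReal.ofReal (a ^ (-b) / b) := by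
  have h1 := (measurePreserving_add_left (volume : Measure ℝ) a).setLIntegral_comp_preimage
    (s := Set.Ioi a) measurableSet_Ioi (f := fun t => ENNReal.ofReal (t ^ (-1-b))) (by fun_prop)
  have h2 : (fun x => a + x) ⁻¹' Set.Ioi a = Set.Ioi 0 := by
    ext x; simp
  rw [h2] at h1
  rw [h1, ← ofReal_integral_eq_lintegral_ofReal (integrableOn_Ioi_rpow_of_lt (by linarith) ha),
    integral_Ioi_rpow_of_lt (by linarith) ha]
  · congr 1
    have : -1 - b + 1 = -b := by ring
    rw [this, neg_div_neg_eq]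
  · filter_upwards [ae_restrict_mem measurableSet_Ioi] with t ht
    have : 0 < t := ha.trans ht
    simp only [Pi.zero_apply]; positivity

lemma lint_half (L : ℝ) (hL : 0 ≤ L) :
    ∫⁻ s in Set.Ioc (0:ℝ) L, ENNReal.ofReal ((1 + L - s) ^ (-(1/2):ℝ)) ≤
      ENNReal.ofReal (2 * (1 + L) ^ (1/2:ℝ)) := by
  have hI : IntervalIntegrable (fun s => (1 + L - s) ^ (-(1/2):ℝ)) volume 0 L := by
    apply ContinuousOn.intervalIntegrable
    apply ContinuousOn.rpow_const (by fun_prop)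
    intro s hs
    rw [Set.uIcc_of_le hL] at hs
    left; have := hs.2; linarith
  rw [← ofReal_integral_eq_lintegral_ofReal]
  · apply ENNReal.ofReal_le_ofReal
    rw [← intervalIntegral.integral_of_le hL,
      intervalIntegral.integral_comp_sub_left (fun t => t ^ (-(1/2):ℝ)) (1+L),
      integral_rpow (Or.inl (by norm_num))]
    norm_num
    linarith
  · exact (intervalIntegrable_iff_integrableOn_Ioc_of_le hL).1 hI
  · filter_upwards [ae_restrict_mem measurableSet_Ioc] with t ht
    have : 0 < 1 + L - t := by linarith [ht.2]
    simp only [Pi.zero_apply]; positivity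

section
variable {E : Type*} [NormedAddCommGroup E] [NormedSpace ℝ E] [MeasurableSpace E] [BorelSpace E]
  [FiniteDimensional ℝ E] (μ : Measure E) [μ.IsAddHaarMeasure]

lemma hardyLog (q : ℝ) (hq : 1 < q) (hN : (Module.finrank ℝ E : ℝ) = q) :
    ∃ K : ℝ≥0∞, K ≠ ∞ ∧ ∀ g : E → ℝ≥0∞, Measurable g →
      ∫⁻ x in {x | 1 < ‖x‖}, ENNReal.ofReal ((1 + Real.log ‖x‖) ^ (-q)) *
        (∫⁻ s in Set.Ioc (0:ℝ) (Real.log ‖x‖),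
          ENNReal.ofReal (rexp (-1 * s)) * g (rexp (-1 * s) • x)) ^ q ∂μ
        ≤ K * ∫⁻ x, g x ^ q ∂μ := by
  have hq0 : 0 < q := by linarith
  have hq1 : 0 < q - 1 := by linarith
  obtain ⟨b, hb⟩ : ∃ b, b = (q-1)/2 := ⟨_, rfl⟩
  have hb0 : 0 < b := by rw [hb]; linarith
  refine ⟨ENNReal.ofReal (2 ^ (q-1)) * ENNReal.ofReal (1/b),
    ENNReal.mul_ne_top ENNReal.ofReal_ne_top ENNReal.ofReal_ne_top, ?_⟩
  intro g hg
  -- kernels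
  let k : E → ℝ → ℝ≥0∞ := fun x s =>
    {p : E × ℝ | p.2 ≤ Real.log ‖p.1‖}.indicator (fun p => ENNReal.ofReal
      ((1 + Real.log ‖p.1‖) ^ (-1-b) * (1 + Real.log ‖p.1‖ - p.2) ^ b)) (x, s)
  have hset : MeasurableSet {p : E × ℝ | p.2 ≤ Real.log ‖p.1‖} :=
    measurableSet_le (by fun_prop) (by fun_prop)
  have hk : Measurable (Function.uncurry k) := by
    change Measurable (fun p : E × ℝ => _)
    exact Measurable.indicator (by fun_prop) hset
  let G : E → ℝ → ℝ≥0∞ := fun y s =>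
    {p : E | 0 ≤ Real.log ‖p‖}.indicator (fun p => ENNReal.ofReal
      ((1 + Real.log ‖p‖ + s) ^ (-1-b) * (1 + Real.log ‖p‖) ^ b) * g p ^ q) y
  have hset' : MeasurableSet {p : E | 0 ≤ Real.log ‖p‖} :=
    measurableSet_le (by fun_prop) (by fun_prop)
  have hG : Measurable (Function.uncurry G) := by
    have : Function.uncurry G = {p : E × ℝ | 0 ≤ Real.log ‖p.1‖}.indicator (fun p => ENNReal.ofReal
      ((1 + Real.log ‖p.1‖ + p.2) ^ (-1-b) * (1 + Real.log ‖p.1‖) ^ b) * g p.1 ^ q) := by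
      ext ⟨y, s⟩
      simp [G, Function.uncurry, Set.indicator]
    rw [this]
    exact Measurable.indicator (by fun_prop) (measurableSet_le (by fun_prop) (by fun_prop))
  calc _ ≤ ∫⁻ x in {x | 1 < ‖x‖}, ENNReal.ofReal (2 ^ (q-1)) * (∫⁻ s in Set.Ioi (0:ℝ), k x s *
        (ENNReal.ofReal (rexp (-1 * s)) * g (rexp (-1 * s) • x)) ^ q) ∂μ := by
        apply setLIntegral_mono' (measurableSet_lt (by fun_prop) (by fun_prop))
        intro x hx
        have hL : 0 < Real.log ‖x‖ := Real.log_pos hx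
        set L := Real.log ‖x‖ with hLd
        have h1 := hoelder_w (volume.restrict (Set.Ioc (0:ℝ) L)) q hq (fun s => (1 + L - s) ^ b)
          (by fun_prop) (by
            filter_upwards [ae_restrict_mem measurableSet_Ioc] with t ht
            have : 0 < 1 + L - t := by linarith [ht.2]
            positivity) (fun s => ENNReal.ofReal (rexp (-1 * s)) * g (rexp (-1 * s) • x))
          (by fun_prop)
        have h2 : ∫⁻ s in Set.Ioc (0:ℝ) L, ENNReal.ofReal (((1 + L - s) ^ b) ^ (-1/(q-1))) ≤
            ENNReal.ofReal (2 * (1 + L) ^ (1/2:ℝ)) := by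
          refine le_trans (le_of_eq ?_) (lint_half L hL.le)
          apply setLIntegral_congr_fun measurableSet_Ioc
          intro t ht
          have : 0 < 1 + L - t := by linarith [ht.2]
          simp only
          rw [← Real.rpow_mul this.le]
          congr 2
          rw [hb]; field_simp
        have h3 : ENNReal.ofReal ((1 + L) ^ (-q)) * ENNReal.ofReal (2 * (1 + L) ^ (1/2:ℝ)) ^ (q-1)
            = ENNReal.ofReal (2 ^ (q-1)) * ENNReal.ofReal ((1+L) ^ (-1-b)) := by
          rw [ENNReal.ofReal_rpow_of_pos (by positivity), ← ENNReal.ofReal_mul (by positivity),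
            ← ENNReal.ofReal_mul (by positivity), Real.mul_rpow (by positivity) (by positivity),
            ← Real.rpow_mul (by positivity), mul_left_comm, ← Real.rpow_add (by positivity)]
          congr 3
          rw [hb]; ring
        calc _ ≤ ENNReal.ofReal ((1 + L) ^ (-q)) * (ENNReal.ofReal (2 * (1 + L) ^ (1/2:ℝ)) ^ (q-1)
              * ∫⁻ s in Set.Ioc (0:ℝ) L, ENNReal.ofReal ((1 + L - s) ^ b) *
              (ENNReal.ofReal (rexp (-1 * s)) * g (rexp (-1 * s) • x)) ^ q) := by
              gcongr
              refine h1.trans ?_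
              gcongr
          _ = ENNReal.ofReal (2 ^ (q-1)) * ∫⁻ s in Set.Ioc (0:ℝ) L, k x s *
              (ENNReal.ofReal (rexp (-1 * s)) * g (rexp (-1 * s) • x)) ^ q := by
              rw [← mul_assoc, h3, mul_assoc, ← lintegral_const_mul' _ _ ENNReal.ofReal_ne_top]
              congr 1
              apply setLIntegral_congr_fun measurableSet_Ioc
              intro t ht
              have hm : (x, t) ∈ {p : E × ℝ | p.2 ≤ Real.log ‖p.1‖} := ht.2
              simp only [k, Set.indicator_of_mem hm]
              rw [← mul_assoc, ← ENNReal.ofReal_mul (by positivity)]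
          _ ≤ _ := by
              gcongr
              exact Set.Ioc_subset_Ioi_self
    _ ≤ ∫⁻ x, ENNReal.ofReal (2 ^ (q-1)) * (∫⁻ s in Set.Ioi (0:ℝ), k x s *
        (ENNReal.ofReal (rexp (-1 * s)) * g (rexp (-1 * s) • x)) ^ q) ∂μ :=
        setLIntegral_le_lintegral _ _
    _ = ENNReal.ofReal (2 ^ (q-1)) * ∫⁻ s in Set.Ioi (0:ℝ), ∫⁻ x, k x s *
        (ENNReal.ofReal (rexp (-1 * s)) * g (rexp (-1 * s) • x)) ^ q ∂μ := by
        rw [lintegral_const_mul' _ _ ENNReal.ofReal_ne_top, lintegral_lintegral_swap]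
        apply Measurable.aemeasurable
        exact hk.mul (by fun_prop)
    _ ≤ ENNReal.ofReal (2 ^ (q-1)) * ∫⁻ s in Set.Ioi (0:ℝ), ∫⁻ y, G y s ∂μ := by
        gcongr ENNReal.ofReal (2 ^ (q-1)) * ?_
        apply setLIntegral_mono' measurableSet_Ioi
        intro s hs
        have hs : 0 < s := hs
        have hGs : Measurable (fun y => G y s) := hG.comp (by fun_prop : Measurable fun y : E => (y, s))
        have h1 := scale_exp μ (-1 * s) (fun y => ENNReal.ofReal (rexp (-s * q)) * G y s) (by fun_prop)
        rw [lintegral_const_mul _ hGs, ← mul_assoc, ← ENNReal.ofReal_mul (by positivity),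
          ← Real.exp_add, hN] at h1
        have h2 : -(-1 * s * q) + -s * q = 0 := by ring
        rw [h2, Real.exp_zero, ENNReal.ofReal_one, one_mul] at h1
        rw [← h1]
        apply lintegral_mono
        intro x
        by_cases hm : s ≤ Real.log ‖x‖
        · have hx : x ≠ 0 := by
            rintro rfl
            simp at hm; linarith
          have hx0 : ‖x‖ ≠ 0 := by simpa using hx
          have hlog : Real.log ‖rexp (-1 * s) • x‖ = Real.log ‖x‖ - s := by
            rw [norm_smul, Real.norm_eq_abs, abs_of_pos (Real.exp_pos _),
              Real.log_mul (Real.exp_pos _).ne' hx0, Real.log_exp]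
            ring
          have hm1 : (x, s) ∈ {p : E × ℝ | p.2 ≤ Real.log ‖p.1‖} := hm
          have hm2 : rexp (-1 * s) • x ∈ {p : E | 0 ≤ Real.log ‖p‖} := by
            change 0 ≤ Real.log ‖rexp (-1 * s) • x‖
            rw [hlog]; linarith
          simp only [k, G, Set.indicator_of_mem hm1, Set.indicator_of_mem hm2, hlog]
          rw [ENNReal.mul_rpow_of_nonneg _ _ hq0.le, ENNReal.ofReal_rpow_of_pos (Real.exp_pos _),
            ← Real.exp_mul]
          apply le_of_eq
          have e1 : 1 + (Real.log ‖x‖ - s) + s = 1 + Real.log ‖x‖ := by ring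
          have e2 : 1 + (Real.log ‖x‖ - s) = 1 + Real.log ‖x‖ - s := by ring
          have e3 : -1 * s * q = - s * q := by ring
          rw [e1, e2, e3]
          ring
        · have hm1 : (x, s) ∉ {p : E × ℝ | p.2 ≤ Real.log ‖p.1‖} := hm
          simp only [k, Set.indicator_of_notMem hm1, zero_mul]
          exact zero_le
    _ = ENNReal.ofReal (2 ^ (q-1)) * ∫⁻ y, ∫⁻ s in Set.Ioi (0:ℝ), G y s ∂volume ∂μ := by
        rw [lintegral_lintegral_swap]
        exact (hG.comp measurable_swap).aemeasurable
    _ ≤ ENNReal.ofReal (2 ^ (q-1)) * ∫⁻ y, ENNReal.ofReal (1/b) * g y ^ q ∂μ := by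
        gcongr with y
        by_cases hm : y ∈ {p : E | 0 ≤ Real.log ‖p‖}
        · simp only [G, Set.indicator_of_mem hm]
          have hm' : 0 ≤ Real.log ‖y‖ := hm
          rw [lintegral_mul_const _ (by fun_prop)]
          gcongr
          calc _ = ∫⁻ s in Set.Ioi (0:ℝ), ENNReal.ofReal ((1 + Real.log ‖y‖ + s) ^ (-1-b)) *
                ENNReal.ofReal ((1 + Real.log ‖y‖) ^ b) := by
                congr with s
                rw [ENNReal.ofReal_mul' (by positivity)]
            _ = ENNReal.ofReal (1/b) := by
                rw [lintegral_mul_const _ (by fun_prop), lint_shift b _ hb0 (by linarith),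
                  ← ENNReal.ofReal_mul' (by positivity), div_mul_eq_mul_div,
                  ← Real.rpow_add (by linarith)]
                simp
            _ ≤ _ := le_rfl
        · simp only [G, Set.indicator_of_notMem hm]
          simp
    _ = _ := by
        rw [lintegral_const_mul' _ _ ENNReal.ofReal_ne_top, mul_assoc]

end

lemma ftc_seg {E : Type*} [NormedAddCommGroup E] [NormedSpace ℝ E] (v : E → ℂ)
    (hv : ContDiff ℝ 1 v) (x y : E) :
    ‖v x - v y‖ₑ ≤ ‖x - y‖ₑ * ∫⁻ t in Set.Ioc (0:ℝ) 1,
      ‖fderiv ℝ v ((1 - t) • y + t • x)‖ₑ := by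
  have hc : Continuous (fderiv ℝ v) := hv.continuous_fderiv (by norm_num)
  have hd : ∀ s ∈ Set.uIcc (0:ℝ) 1, HasDerivAt (fun t : ℝ => v ((1 - t) • y + t • x))
      (fderiv ℝ v ((1 - s) • y + s • x) (x - y)) s := by
    intro s _
    have h1 : HasDerivAt (fun t : ℝ => (1 - t) • y + t • x) (x - y) s := by
      have h2 := (((hasDerivAt_id s).const_sub 1).smul_const y).add ((hasDerivAt_id s).smul_const x)
      simp only [id, one_smul, neg_smul] at h2
      rw [sub_eq_neg_add]
      exact h2
    exact ((hv.differentiable (by norm_num)) _).hasFDerivAt.comp_hasDerivAt s h1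
  have h := intervalIntegral.integral_eq_sub_of_hasDerivAt hd
    (Continuous.intervalIntegrable (by fun_prop) _ _)
  simp only [sub_self, zero_smul, one_smul, zero_add, sub_zero, add_zero] at h
  rw [← h, intervalIntegral.integral_of_le zero_le_one]
  refine (enorm_integral_le_lintegral_enorm _).trans ?_
  rw [← lintegral_const_mul' _ _ (by simp)]
  apply lintegral_mono
  intro s
  refine (ContinuousLinearMap.le_opENorm _ _).trans ?_
  rw [mul_comm]

section
variable {E : Type*} [NormedAddCommGroup E] [NormedSpace ℝ E] [MeasurableSpace E] [BorelSpace E]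
  [FiniteDimensional ℝ E] (μ : Measure E) [μ.IsAddHaarMeasure]

lemma affine_lint (t : ℝ) (ht : 1/2 ≤ t) (a : E) (F : E → ℝ≥0∞) (hF : Measurable F) :
    ∫⁻ x, F (a + t • x) ∂μ ≤ ENNReal.ofReal (2 ^ Module.finrank ℝ E) * ∫⁻ x, F x ∂μ := by
  have ht0 : 0 < t := by linarith
  rw [scale_lint μ t ht0 (fun x => F (a + x)) (by fun_prop), lintegral_add_left_eq_self]
  gcongr
  rw [← inv_pow]
  gcongr
  rw [inv_le_comm₀ ht0 (by norm_num)]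
  linarith

lemma poincare (q : ℝ) (hq : 1 < q) (u : E → ℂ) (hu : ContDiff ℝ 1 u) (R : ℝ) (hR : 0 < R) :
    ∃ c : ℂ, ∫⁻ x in Metric.closedBall 0 R, ‖u x - c‖ₑ ^ q ∂μ ≤
      ENNReal.ofReal ((2 * R) ^ q * 2 ^ Module.finrank ℝ E) * ∫⁻ x, ‖fderiv ℝ u x‖ₑ ^ q ∂μ := by
  have hq0 : 0 < q := by linarith
  have hc : Continuous (fderiv ℝ u) := hu.continuous_fderiv (by norm_num)
  have hcu : Continuous u := hu.continuous
  let F : E → ℝ≥0∞ := fun x => ‖fderiv ℝ u x‖ₑ ^ q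
  have hF : Measurable F := by
    have : Measurable (fun x => ‖fderiv ℝ u x‖ₑ) := hc.enorm.measurable
    fun_prop
  set B := Metric.closedBall (0:E) R with hB
  have hBm : MeasurableSet B := Metric.isClosed_closedBall.measurableSet
  have hB0 : μ B ≠ 0 := (Metric.measure_closedBall_pos μ 0 hR).ne'
  have hBt : μ B ≠ ∞ := (isCompact_closedBall 0 R).measure_ne_top
  have key : ∀ x ∈ B, ∀ y ∈ B, ‖u x - u y‖ₑ ^ q ≤ ENNReal.ofReal ((2 * R) ^ q) *
      ∫⁻ t in Set.Ioc (0:ℝ) 1, F ((1 - t) • y + t • x) := by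
    intro x hx y hy
    refine (ENNReal.rpow_le_rpow (ftc_seg u hu x y) hq0.le).trans ?_
    rw [ENNReal.mul_rpow_of_nonneg _ _ hq0.le]
    gcongr
    · rw [← ENNReal.ofReal_rpow_of_pos (by positivity)]
      gcongr
      rw [← ofReal_norm]
      apply ENNReal.ofReal_le_ofReal
      have h1 : ‖x‖ ≤ R := by simpa [hB] using hx
      have h2 : ‖y‖ ≤ R := by simpa [hB] using hy
      linarith [norm_sub_le x y]
    · have := hoelder_w (volume.restrict (Set.Ioc (0:ℝ) 1)) q hq (fun _ => 1) (by fun_prop)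
        (by simp) (fun t => ‖fderiv ℝ u ((1 - t) • y + t • x)‖ₑ)
        (by
          have : Continuous (fun t : ℝ => ‖fderiv ℝ u ((1 - t) • y + t • x)‖ₑ) := by fun_prop
          exact this.measurable.aemeasurable)
      simpa [F] using this
  have hm3 : Measurable (fun p : (E × E) × ℝ => F ((1 - p.2) • p.1.2 + p.2 • p.1.1)) := by fun_prop
  have hint : ∫⁻ y in B, ∫⁻ x in B, ‖u x - u y‖ₑ ^ q ∂μ ∂μ ≤
      μ B * (ENNReal.ofReal ((2 * R) ^ q * 2 ^ Module.finrank ℝ E) * ∫⁻ x, F x ∂μ) := by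
    calc _ ≤ ∫⁻ y in B, ∫⁻ x in B, ENNReal.ofReal ((2 * R) ^ q) *
          (∫⁻ t in Set.Ioc (0:ℝ) 1, F ((1 - t) • y + t • x)) ∂μ ∂μ := by
          apply setLIntegral_mono' hBm
          intro y hy
          apply setLIntegral_mono' hBm
          intro x hx
          exact key x hx y hy
      _ = ENNReal.ofReal ((2 * R) ^ q) * ∫⁻ y in B, ∫⁻ x in B,
          (∫⁻ t in Set.Ioc (0:ℝ) 1, F ((1 - t) • y + t • x)) ∂μ ∂μ := by
          simp_rw [lintegral_const_mul' _ _ ENNReal.ofReal_ne_top]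
      _ = ENNReal.ofReal ((2 * R) ^ q) * ∫⁻ y in B, ∫⁻ t in Set.Ioc (0:ℝ) 1, ∫⁻ x in B,
          F ((1 - t) • y + t • x) ∂μ ∂volume ∂μ := by
          congr with y
          rw [lintegral_lintegral_swap]
          apply Measurable.aemeasurable
          fun_prop
      _ = ENNReal.ofReal ((2 * R) ^ q) * ∫⁻ t in Set.Ioc (0:ℝ) 1, ∫⁻ y in B, ∫⁻ x in B,
          F ((1 - t) • y + t • x) ∂μ ∂μ ∂volume := by
          rw [lintegral_lintegral_swap]
          apply Measurable.aemeasurable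
          apply Measurable.lintegral_prod_right' (f := fun p : (E × ℝ) × E =>
            F ((1 - p.1.2) • p.1.1 + p.1.2 • p.2))
          fun_prop
      _ ≤ ENNReal.ofReal ((2 * R) ^ q) * ∫⁻ t in Set.Ioc (0:ℝ) 1,
          μ B * (ENNReal.ofReal (2 ^ Module.finrank ℝ E) * ∫⁻ x, F x ∂μ) := by
          gcongr with t
          rcases le_total (1/2) t with ht | ht
          · calc _ ≤ ∫⁻ y in B, (ENNReal.ofReal (2 ^ Module.finrank ℝ E) * ∫⁻ x, F x ∂μ) ∂μ := by
                  gcongr with y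
                  exact (setLIntegral_le_lintegral _ _).trans (affine_lint μ t ht _ F hF)
              _ = _ := by rw [setLIntegral_const, mul_comm]
          · calc _ = ∫⁻ x in B, ∫⁻ y in B, F ((1 - t) • y + t • x) ∂μ ∂μ := by
                  rw [lintegral_lintegral_swap]
                  apply Measurable.aemeasurable
                  fun_prop
              _ ≤ ∫⁻ x in B, (ENNReal.ofReal (2 ^ Module.finrank ℝ E) * ∫⁻ x, F x ∂μ) ∂μ := by
                  gcongr with x
                  simp_rw [add_comm _ (t • x)]
                  exact (setLIntegral_le_lintegral _ _).trans
                    (affine_lint μ (1-t) (by linarith) _ F hF)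
              _ = _ := by rw [setLIntegral_const, mul_comm]
      _ = _ := by
          rw [setLIntegral_const, ENNReal.ofReal_mul (by positivity)]
          simp only [Real.volume_Ioc, sub_zero, ENNReal.ofReal_one, mul_one]
          ring
  obtain ⟨y, -, hy⟩ := exists_le_setLAverage (μ := μ) (s := B)
    (f := fun y => ∫⁻ x in B, ‖u x - u y‖ₑ ^ q ∂μ) hB0 hBt (by
      apply Measurable.aemeasurable
      apply Measurable.lintegral_prod_right' (f := fun p : E × E => ‖u p.2 - u p.1‖ₑ ^ q)
      have : Measurable (fun p : E × E => ‖u p.2 - u p.1‖ₑ) := by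
        have : Continuous (fun p : E × E => ‖u p.2 - u p.1‖ₑ) := by fun_prop
        exact this.measurable
      fun_prop)
  refine ⟨u y, hy.trans ?_⟩
  rw [setLAverage_eq]
  exact ENNReal.div_le_of_le_mul' hint

end

lemma exists_bump (E : Type*) [NormedAddCommGroup E] [NormedSpace ℝ E] [FiniteDimensional ℝ E] : ∃ M : ℝ, 0 < M ∧ ∀ R : ℝ, 0 < R → ∃ φ : E → ℝ, ContDiff ℝ 1 φ ∧
    (∀ x, 0 ≤ φ x ∧ φ x ≤ 1) ∧ (∀ x, ‖x‖ ≤ R → φ x = 1) ∧ (∀ x, 2 * R ≤ ‖x‖ → φ x = 0) ∧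
    (∀ x, ‖fderiv ℝ φ x‖ ≤ M / R) ∧ (∀ x, 2 * R < ‖x‖ → fderiv ℝ φ x = 0) := by
  let f : ContDiffBump (0:E) := ⟨1, 2, by norm_num, by norm_num⟩
  have hf : ContDiff ℝ 1 f := f.contDiff
  obtain ⟨M, hM⟩ := (hf.continuous_fderiv (by norm_num)).bounded_above_of_compact_support
    (f.hasCompactSupport.fderiv (𝕜 := ℝ))
  refine ⟨max M 1, by positivity, fun R hR => ⟨fun x => f (R⁻¹ • x), ?_, ?_, ?_, ?_, ?_, ?_⟩⟩
  · fun_prop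
  · exact fun x => ⟨f.nonneg, f.le_one⟩
  · intro x hx
    apply f.one_of_mem_closedBall
    simp only [mem_closedBall_zero_iff, norm_smul, norm_inv, Real.norm_eq_abs, abs_of_pos hR, f]
    rw [inv_mul_le_iff₀ hR]; linarith
  · intro x hx
    apply f.zero_of_le_dist
    simp only [dist_zero_right, norm_smul, norm_inv, Real.norm_eq_abs, abs_of_pos hR, f]
    rw [le_inv_mul_iff₀ hR]; linarith
  · intro x
    rw [fderiv_comp_smul, norm_smul, norm_inv, Real.norm_eq_abs, abs_of_pos hR, div_eq_inv_mul]
    gcongr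
    exact (hM _).trans (le_max_left _ _)
  · intro x hx
    rw [fderiv_comp_smul]
    have : fderiv ℝ f (R⁻¹ • x) = 0 := by
      apply image_eq_zero_of_notMem_tsupport
      intro h
      have h2 := tsupport_fderiv_subset ℝ h
      rw [f.tsupport_eq] at h2
      simp only [mem_closedBall_zero_iff, norm_smul, norm_inv, Real.norm_eq_abs, abs_of_pos hR, f] at h2
      rw [inv_mul_le_iff₀ hR] at h2; linarith
    rw [this, smul_zero]

section
variable {E : Type*} [NormedAddCommGroup E] [NormedSpace ℝ E] [MeasurableSpace E] [BorelSpace E]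
  [FiniteDimensional ℝ E] (μ : Measure E) [μ.IsAddHaarMeasure]

lemma cutoff (q : ℝ) (hq : 1 < q) (M : ℝ) (hM : 0 < M) (u : E → ℂ) (hu : ContDiff ℝ 1 u)
    (R : ℝ) (hR : 0 < R) (ψ : E → ℝ) (hψ : ContDiff ℝ 1 ψ) (h01 : ∀ x, 0 ≤ ψ x ∧ ψ x ≤ 1)
    (hA : ∀ x, ‖fderiv ℝ ψ x‖ ≤ M / R) (h0 : ∀ x, 2 * R < ‖x‖ → fderiv ℝ ψ x = 0) (c : ℂ)
    (hc : ∫⁻ x in Metric.closedBall 0 (2 * R), ‖u x - c‖ₑ ^ q ∂μ ≤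
      ENNReal.ofReal ((2 * (2 * R)) ^ q * 2 ^ Module.finrank ℝ E) * ∫⁻ x, ‖fderiv ℝ u x‖ₑ ^ q ∂μ) :
    ∫⁻ x, ‖fderiv ℝ (fun x => ψ x • (u x - c)) x‖ₑ ^ q ∂μ ≤
      (2 ^ (q-1) * (1 + ENNReal.ofReal ((4 * M) ^ q * 2 ^ Module.finrank ℝ E))) *
        ∫⁻ x, ‖fderiv ℝ u x‖ₑ ^ q ∂μ := by
  have hq0 : 0 < q := by linarith
  have hcd : Continuous (fderiv ℝ u) := hu.continuous_fderiv (by norm_num)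
  have hm : Measurable (fun x => ‖fderiv ℝ u x‖ₑ) := hcd.enorm.measurable
  have h2 : (2:ℝ≥0∞) ^ (q-1) ≠ ∞ := ENNReal.rpow_ne_top_of_nonneg (by linarith) (by simp)
  have hBm : MeasurableSet (Metric.closedBall (0:E) (2 * R)) := Metric.isClosed_closedBall.measurableSet
  have key : ∀ x, ‖fderiv ℝ (fun x => ψ x • (u x - c)) x‖ₑ ^ q ≤ 2 ^ (q-1) *
      (‖fderiv ℝ u x‖ₑ ^ q + ENNReal.ofReal ((M / R) ^ q) *
        (Metric.closedBall (0:E) (2 * R)).indicator (fun x => ‖u x - c‖ₑ ^ q) x) := by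
    intro x
    have e : fderiv ℝ (fun x => ψ x • (u x - c)) x =
        ψ x • fderiv ℝ u x + (fderiv ℝ ψ x).smulRight (u x - c) := by
      rw [fderiv_fun_smul ((hψ.differentiable (by norm_num)) x)
        (((hu.differentiable (by norm_num)) x).sub_const c), fderiv_sub_const]
    have h1 : ‖fderiv ℝ (fun x => ψ x • (u x - c)) x‖ₑ ≤
        ‖fderiv ℝ u x‖ₑ + ‖fderiv ℝ ψ x‖ₑ * ‖u x - c‖ₑ := by
      rw [e]
      simp only [← ofReal_norm]
      rw [← ENNReal.ofReal_mul (by positivity), ← ENNReal.ofReal_add (by positivity) (by positivity)]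
      apply ENNReal.ofReal_le_ofReal
      refine (norm_add_le _ _).trans ?_
      rw [ContinuousLinearMap.norm_smulRight_apply, norm_smul, Real.norm_eq_abs, abs_of_nonneg (h01 x).1]
      gcongr
      exact mul_le_of_le_one_left (norm_nonneg _) (h01 x).2
    refine (ENNReal.rpow_le_rpow h1 hq0.le).trans ?_
    refine (ENNReal.rpow_add_le_mul_rpow_add_rpow _ _ hq.le).trans ?_
    gcongr
    by_cases hx : x ∈ Metric.closedBall (0:E) (2 * R)
    · rw [Set.indicator_of_mem hx, ENNReal.mul_rpow_of_nonneg _ _ hq0.le,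
        ← ENNReal.ofReal_rpow_of_pos (by positivity)]
      gcongr
      rw [← ofReal_norm]
      exact ENNReal.ofReal_le_ofReal (hA x)
    · rw [h0 x (by simpa using hx), ← ofReal_norm, norm_zero, ENNReal.ofReal_zero, zero_mul, ENNReal.zero_rpow_of_pos hq0]
      exact zero_le
  calc _ ≤ _ := lintegral_mono key
    _ = 2 ^ (q-1) * (∫⁻ x, ‖fderiv ℝ u x‖ₑ ^ q ∂μ + ENNReal.ofReal ((M / R) ^ q) *
        ∫⁻ x in Metric.closedBall (0:E) (2 * R), ‖u x - c‖ₑ ^ q ∂μ) := by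
        rw [lintegral_const_mul' _ _ h2, lintegral_add_left (by fun_prop),
          lintegral_const_mul' _ _ ENNReal.ofReal_ne_top, lintegral_indicator hBm]
    _ ≤ 2 ^ (q-1) * (∫⁻ x, ‖fderiv ℝ u x‖ₑ ^ q ∂μ + ENNReal.ofReal ((M / R) ^ q) *
        (ENNReal.ofReal ((2 * (2 * R)) ^ q * 2 ^ Module.finrank ℝ E) *
          ∫⁻ x, ‖fderiv ℝ u x‖ₑ ^ q ∂μ)) := by gcongr
    _ = _ := by
        rw [← mul_assoc (ENNReal.ofReal _), ← ENNReal.ofReal_mul (by positivity), ← mul_assoc ((M/R)^q),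
          ← Real.mul_rpow (by positivity) (by positivity)]
        have : M / R * (2 * (2 * R)) = 4 * M := by field_simp; ring
        rw [this]
        ring

lemma div_bound (q : ℝ) (hq : 1 < q) (a J X : ℝ≥0∞) (d : ℝ)
    (h : a ≤ X * J) (hX : X ≤ ENNReal.ofReal d) :
    a ^ q / ENNReal.ofReal d ^ q ≤ J ^ q := by
  have hq0 : 0 < q := by linarith
  rw [← ENNReal.div_rpow_of_nonneg _ _ hq0.le]
  gcongr
  apply ENNReal.div_le_of_le_mul'
  exact h.trans (by gcongr)

lemma case_gt (q : ℝ) (hq : 1 < q) (hN : (Module.finrank ℝ E : ℝ) < q) (d : E → ℝ)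
    (hd : ∀ x, ‖x‖ ≤ d x) :
    ∃ K : ℝ≥0∞, K ≠ ∞ ∧ ∀ u : E → ℂ, ContDiff ℝ 1 u → ∃ c : ℂ,
      ∫⁻ x, ‖u x - c‖ₑ ^ q / ENNReal.ofReal (d x) ^ q ∂μ ≤ K * ∫⁻ x, ‖fderiv ℝ u x‖ₑ ^ q ∂μ := by
  obtain ⟨K, hK, h⟩ := hardyA μ q hq (-1) (by linarith)
  refine ⟨K, hK, fun u hu => ⟨u 0, ?_⟩⟩
  have hcd : Continuous (fderiv ℝ u) := hu.continuous_fderiv (by norm_num)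
  refine le_trans (lintegral_mono fun x => ?_) (h (fun x => ‖fderiv ℝ u x‖ₑ) hcd.enorm.measurable)
  apply div_bound q hq _ _ ‖x‖ₑ _
  · have h1 : ∀ S : ℝ, 0 ≤ S → ‖u (rexp (-1 * S) • x) - u x‖ₑ ≤ ‖x‖ₑ * ∫⁻ s in Set.Ioi (0:ℝ),
        ENNReal.ofReal (rexp (-1 * s)) * ‖fderiv ℝ u (rexp (-1 * s) • x)‖ₑ := by
      intro S hS
      refine (ftc_ray u hu (-1) (by simp) S hS x).trans ?_
      gcongr
      exact Set.Ioc_subset_Ioi_self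
    have ht : Filter.Tendsto (fun S : ℝ => ‖u (rexp (-1 * S) • x) - u x‖ₑ) Filter.atTop
        (nhds ‖u ((0:ℝ) • x) - u x‖ₑ) := by
      have h2 : Filter.Tendsto (fun S : ℝ => rexp (-1 * S)) Filter.atTop (nhds 0) := by
        simpa using Real.tendsto_exp_neg_atTop_nhds_zero
      have h3 : Continuous (fun r : ℝ => ‖u (r • x) - u x‖ₑ) := by
        have := hu.continuous
        fun_prop
      exact (h3.tendsto 0).comp h2
    have := le_of_tendsto ht (Filter.eventually_atTop.2 ⟨0, h1⟩)
    rw [zero_smul] at this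
    rwa [← enorm_neg, neg_sub]
  · rw [← ofReal_norm]
    exact ENNReal.ofReal_le_ofReal (hd x)

lemma case_lt_loc [Nontrivial E] (q : ℝ) (hq : 1 < q) (hN : q < (Module.finrank ℝ E : ℝ)) (d : E → ℝ)
    (hd : ∀ x, ‖x‖ ≤ d x) :
    ∃ K : ℝ≥0∞, K ≠ ∞ ∧ ∀ u : E → ℂ, ContDiff ℝ 1 u → ∀ R : ℝ, 0 < R → ∃ c : ℂ,
      ∫⁻ x in Metric.closedBall 0 R, ‖u x - c‖ₑ ^ q / ENNReal.ofReal (d x) ^ q ∂μ ≤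
        K * ∫⁻ x, ‖fderiv ℝ u x‖ₑ ^ q ∂μ := by
  obtain ⟨K, hK, h⟩ := hardyA μ q hq 1 (by linarith)
  obtain ⟨M, hM, hb⟩ := exists_bump E
  have h2 : (2:ℝ≥0∞) ^ (q-1) ≠ ∞ := ENNReal.rpow_ne_top_of_nonneg (by linarith) (by simp)
  refine ⟨K * (2 ^ (q-1) * (1 + ENNReal.ofReal ((4 * M) ^ q * 2 ^ Module.finrank ℝ E))),
    ENNReal.mul_ne_top hK (ENNReal.mul_ne_top h2 (by simp)), fun u hu R hR => ?_⟩
  obtain ⟨c, hc⟩ := poincare μ q hq u hu (2 * R) (by linarith)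
  obtain ⟨φ, hφ, h01, hφ1, hφ0, hA, hD⟩ := hb R hR
  refine ⟨c, ?_⟩
  have hcut := cutoff μ q hq M hM u hu R hR φ hφ h01 hA hD c hc
  set v : E → ℂ := fun x => φ x • (u x - c) with hvd
  have hv : ContDiff ℝ 1 v := by fun_prop
  have hcd : Continuous (fderiv ℝ v) := hv.continuous_fderiv (by norm_num)
  rw [mul_assoc]
  refine le_trans ?_ (mul_le_mul_right hcut K)
  refine le_trans ?_ (h (fun x => ‖fderiv ℝ v x‖ₑ) hcd.enorm.measurable)
  refine le_trans ?_ (setLIntegral_le_lintegral (Metric.closedBall 0 R) _)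
  apply lintegral_mono_ae
  have hne : ∀ᵐ x ∂(μ.restrict (Metric.closedBall (0:E) R)), x ≠ 0 := by
    apply ae_restrict_of_ae
    exact Measure.ae_ne μ 0
  filter_upwards [hne, ae_restrict_mem Metric.isClosed_closedBall.measurableSet] with x hx hxR
  have hxp : 0 < ‖x‖ := norm_pos_iff.2 hx
  apply div_bound q hq _ _ ‖x‖ₑ _
  · have hvx : v x = u x - c := by
      simp [hvd, hφ1 x (by simpa using hxR)]
    rw [← hvx]
    obtain ⟨S, hS0, hS⟩ : ∃ S : ℝ, 0 ≤ S ∧ 2 * R ≤ ‖rexp (1 * S) • x‖ := by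
      refine ⟨2 * R / ‖x‖, by positivity, ?_⟩
      rw [norm_smul, Real.norm_eq_abs, abs_of_pos (Real.exp_pos _), one_mul, ← div_le_iff₀ hxp]
      linarith [Real.add_one_le_exp (2 * R / ‖x‖)]
    have h1 := ftc_ray v hv 1 (by simp) S hS0 x
    have h3 : v (rexp (1 * S) • x) = 0 := by
      simp only [hvd]
      rw [hφ0 _ hS, zero_smul]
    rw [h3, zero_sub, enorm_neg] at h1
    refine h1.trans ?_
    gcongr
    exact Set.Ioc_subset_Ioi_self
  · rw [← ofReal_norm]
    exact ENNReal.ofReal_le_ofReal (hd x)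

lemma case_eq (q : ℝ) (hq : 1 < q) (hN : (Module.finrank ℝ E : ℝ) = q) (d : E → ℝ)
    (lam : ℝ) (hlam : 0 < lam) (κ : ℝ) (hκ : 0 < κ)
    (hd0 : ∀ x, lam ≤ d x) (hd : ∀ x, 1 < ‖x‖ → κ * (‖x‖ * (1 + Real.log ‖x‖)) ≤ d x) :
    ∃ K : ℝ≥0∞, K ≠ ∞ ∧ ∀ u : E → ℂ, ContDiff ℝ 1 u → ∃ c : ℂ,
      ∫⁻ x, ‖u x - c‖ₑ ^ q / ENNReal.ofReal (d x) ^ q ∂μ ≤ K * ∫⁻ x, ‖fderiv ℝ u x‖ₑ ^ q ∂μ := by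
  have hq0 : 0 < q := by linarith
  obtain ⟨K, hK, h⟩ := hardyLog μ q hq hN
  obtain ⟨M, hM, hb⟩ := exists_bump E
  have h2 : (2:ℝ≥0∞) ^ (q-1) ≠ ∞ := ENNReal.rpow_ne_top_of_nonneg (by linarith) (by simp)
  set P := ENNReal.ofReal ((2 * (2 * 1)) ^ q * 2 ^ Module.finrank ℝ E) with hP
  set Q := (2 ^ (q-1) * (1 + ENNReal.ofReal ((4 * M) ^ q * 2 ^ Module.finrank ℝ E))) with hQ
  refine ⟨ENNReal.ofReal (lam ^ (-q)) * P + ENNReal.ofReal (κ ^ (-q)) * (K * Q),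
    ?_, fun u hu => ?_⟩
  · exact ENNReal.add_ne_top.2 ⟨ENNReal.mul_ne_top (by simp) (by simp [hP]),
      ENNReal.mul_ne_top (by simp) (ENNReal.mul_ne_top hK (ENNReal.mul_ne_top h2 (by simp)))⟩
  obtain ⟨c, hc⟩ := poincare μ q hq u hu (2 * 1) (by norm_num)
  obtain ⟨φ, hφ, h01, hφ1, hφ0, hA, hD⟩ := hb 1 one_pos
  refine ⟨c, ?_⟩
  have hfd : ∀ x, fderiv ℝ (fun x => 1 - φ x) x = - fderiv ℝ φ x := fun x => by
    rw [fderiv_const_sub]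
  have hcut := cutoff μ q hq M hM u hu 1 one_pos (fun x => 1 - φ x) (by fun_prop)
    (fun x => ⟨by linarith [(h01 x).2], by linarith [(h01 x).1]⟩)
    (fun x => by rw [hfd, norm_neg]; exact hA x) (fun x hx => by rw [hfd, hD x hx, neg_zero]) c hc
  set v : E → ℂ := fun x => (1 - φ x) • (u x - c) with hvd
  have hv : ContDiff ℝ 1 v := by fun_prop
  have hcd : Continuous (fderiv ℝ v) := hv.continuous_fderiv (by norm_num)
  have hBm : MeasurableSet (Metric.closedBall (0:E) (2 * 1)) := Metric.isClosed_closedBall.measurableSet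
  rw [← lintegral_add_compl _ hBm, add_mul]
  apply add_le_add
  · rw [mul_assoc]
    refine le_trans ?_ (mul_le_mul_right hc _)
    rw [← lintegral_const_mul' _ _ ENNReal.ofReal_ne_top]
    apply lintegral_mono
    intro x
    simp only
    rw [mul_comm, div_eq_mul_inv, ← ENNReal.rpow_neg, ← ENNReal.ofReal_rpow_of_pos hlam]
    refine mul_le_mul_right ?_ _
    rw [ENNReal.rpow_neg, ENNReal.rpow_neg]
    gcongr
    exact hd0 x
  · have h3 := (h (fun x => ‖fderiv ℝ v x‖ₑ) hcd.enorm.measurable).trans (mul_le_mul_right hcut K)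
    rw [mul_assoc, mul_assoc]
    refine le_trans ?_ (mul_le_mul_right h3 _)
    rw [← lintegral_const_mul' _ _ ENNReal.ofReal_ne_top]
    have hsub : (Metric.closedBall (0:E) (2 * 1))ᶜ ⊆ {x | 1 < ‖x‖} := by
      intro x hx
      simp at hx
      simp; linarith
    refine le_trans ?_ (lintegral_mono_set hsub)
    apply setLIntegral_mono' hBm.compl
    intro x hx
    have hx1 : 1 < ‖x‖ := hsub hx
    have hx2 : 2 * 1 ≤ ‖x‖ := by simp at hx; linarith
    have hL : 0 < Real.log ‖x‖ := Real.log_pos hx1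
    have hvx : v x = u x - c := by simp [hvd, hφ0 x hx2]
    rw [← hvx]
    have h1 := ftc_ray v hv (-1) (by simp) (Real.log ‖x‖) hL.le x
    have hn : ‖rexp (-1 * Real.log ‖x‖) • x‖ ≤ 1 := by
      rw [norm_smul, Real.norm_eq_abs, abs_of_pos (Real.exp_pos _), neg_one_mul, Real.exp_neg,
        Real.exp_log (by linarith), inv_mul_cancel₀ (by linarith)]
    have h5 : v (rexp (-1 * Real.log ‖x‖) • x) = 0 := by
      simp only [hvd]
      rw [hφ1 _ hn, sub_self, zero_smul]
    rw [h5, zero_sub, enorm_neg] at h1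
    set J := ∫⁻ s in Set.Ioc 0 (Real.log ‖x‖),
      ENNReal.ofReal (rexp (-1 * s)) * ‖fderiv ℝ v (rexp (-1 * s) • x)‖ₑ with hJ
    have e : ENNReal.ofReal (κ ^ (-q)) * (ENNReal.ofReal ((1 + Real.log ‖x‖) ^ (-q)) * J ^ q) =
        (ENNReal.ofReal ((κ * (1 + Real.log ‖x‖))⁻¹) * J) ^ q := by
      rw [ENNReal.mul_rpow_of_nonneg _ _ hq0.le, ENNReal.ofReal_rpow_of_pos (by positivity),
        ← mul_assoc, ← ENNReal.ofReal_mul (by positivity), Real.inv_rpow (by positivity),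
        ← Real.rpow_neg (by positivity), Real.mul_rpow (by positivity) (by positivity)]
    rw [e]
    apply div_bound q hq _ _ (ENNReal.ofReal (κ * (‖x‖ * (1 + Real.log ‖x‖)))) _
    · refine h1.trans (le_of_eq ?_)
      rw [← mul_assoc, ← ENNReal.ofReal_mul (by positivity), ← ofReal_norm]
      congr 2
      field_simp
    · exact ENNReal.ofReal_le_ofReal (hd x hx1)

end

section
variable {E : Type*} [NormedAddCommGroup E] [NormedSpace ℝ E] [MeasurableSpace E] [BorelSpace E]
  [FiniteDimensional ℝ E] (μ : Measure E) [μ.IsAddHaarMeasure]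

lemma case_lt [Nontrivial E] (q : ℝ) (hq : 1 < q) (hN : q < (Module.finrank ℝ E : ℝ)) (d : E → ℝ)
    (hdc : Continuous d) (hd0 : ∀ x, 0 < d x) (hd : ∀ x, ‖x‖ ≤ d x) (hd2 : ∀ x, ‖x‖ ≤ 1 → d x ≤ 2) :
    ∃ K : ℝ≥0∞, K ≠ ∞ ∧ ∀ u : E → ℂ, ContDiff ℝ 1 u → ∫⁻ x, ‖fderiv ℝ u x‖ₑ ^ q ∂μ ≠ ∞ → ∃ c : ℂ,
      ∫⁻ x, ‖u x - c‖ₑ ^ q / ENNReal.ofReal (d x) ^ q ∂μ ≤ K * ∫⁻ x, ‖fderiv ℝ u x‖ₑ ^ q ∂μ := by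
  have hq0 : 0 < q := by linarith
  obtain ⟨K, hK, h⟩ := case_lt_loc μ q hq hN d hd
  refine ⟨K, hK, fun u hu hI => ?_⟩
  have hcu : Continuous u := hu.continuous
  set I := ∫⁻ x, ‖fderiv ℝ u x‖ₑ ^ q ∂μ with hId
  choose c hc using fun n : ℕ => h u hu (n + 1 : ℝ) (by positivity)
  set B := Metric.closedBall (0:E) 1 with hB
  have hB0 : μ B ≠ 0 := (Metric.measure_closedBall_pos μ 0 one_pos).ne'
  have hBt : μ B ≠ ∞ := (isCompact_closedBall 0 1).measure_ne_top
  have hBm : MeasurableSet B := Metric.isClosed_closedBall.measurableSet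
  obtain ⟨M, hM⟩ := (isCompact_closedBall (0:E) 1).exists_bound_of_continuousOn hcu.continuousOn
  -- boundedness
  set T := (K * I * ENNReal.ofReal 2 ^ q / μ B) with hT
  have hTt : T ≠ ∞ := ENNReal.div_ne_top (ENNReal.mul_ne_top (ENNReal.mul_ne_top hK hI)
    (ENNReal.rpow_ne_top_of_nonneg hq0.le ENNReal.ofReal_ne_top)) hB0
  have h2t : ENNReal.ofReal 2 ^ q ≠ ∞ := ENNReal.rpow_ne_top_of_nonneg hq0.le ENNReal.ofReal_ne_top
  have h20 : ENNReal.ofReal 2 ^ q ≠ 0 := by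
    rw [ENNReal.ofReal_rpow_of_pos (by norm_num)]
    simp; positivity
  have hbd : ∀ n, ‖c n‖ ≤ M + (T ^ (1/q)).toReal := by
    intro n
    have h1 : ENNReal.ofReal (‖c n‖ - M) ^ q / ENNReal.ofReal 2 ^ q * μ B ≤ K * I := by
      rw [← setLIntegral_const]
      refine le_trans ?_ (hc n)
      have hsub : B ⊆ Metric.closedBall (0:E) (n + 1 : ℝ) :=
        Metric.closedBall_subset_closedBall (by linarith [(Nat.cast_nonneg n : (0:ℝ) ≤ n)])
      refine le_trans ?_ (lintegral_mono_set hsub)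
      apply setLIntegral_mono' hBm
      intro x hx
      have hx1 : ‖x‖ ≤ 1 := by simpa [hB] using hx
      gcongr
      · rw [← ofReal_norm]
        apply ENNReal.ofReal_le_ofReal
        have := hM x hx
        have h3 := norm_sub_norm_le (c n) (u x)
        rw [norm_sub_rev] at h3
        linarith
      · exact hd2 x hx1
    have h2 : ENNReal.ofReal (‖c n‖ - M) ^ q ≤ T := by
      rw [hT, ENNReal.le_div_iff_mul_le (Or.inl hB0) (Or.inl hBt)]
      calc _ = ENNReal.ofReal (‖c n‖ - M) ^ q / ENNReal.ofReal 2 ^ q * μ B * ENNReal.ofReal 2 ^ q := by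
            rw [mul_right_comm, ENNReal.div_mul_cancel h20 h2t]
        _ ≤ _ := by gcongr
    have h3 : ENNReal.ofReal (‖c n‖ - M) ≤ T ^ (1/q) := by
      rw [one_div, ENNReal.le_rpow_inv_iff hq0]
      exact h2
    have h4 := (ENNReal.ofReal_le_iff_le_toReal
      (ENNReal.rpow_ne_top_of_nonneg (by positivity) hTt)).1 h3
    linarith
  obtain ⟨c0, -, φ, hφ, hlim⟩ := tendsto_subseq_of_bounded
    (Metric.isBounded_closedBall (x := (0:ℂ)) (r := M + (T ^ (1/q)).toReal)) (x := c)
    (fun n => by simpa using hbd n)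
  refine ⟨c0, ?_⟩
  let f : ℕ → E → ℝ≥0∞ := fun n => (Metric.closedBall (0:E) ((φ n : ℕ) + 1 : ℝ)).indicator
    (fun x => ‖u x - c (φ n)‖ₑ ^ q / ENNReal.ofReal (d x) ^ q)
  have hfm : ∀ n, Measurable (f n) := by
    intro n
    apply Measurable.indicator _ Metric.isClosed_closedBall.measurableSet
    have h1 : Measurable (fun x => ‖u x - c (φ n)‖ₑ) := by
      have : Continuous (fun x => ‖u x - c (φ n)‖ₑ) := by fun_prop
      exact this.measurable
    have h2 := hdc.measurable
    fun_prop
  have hpt : ∀ x, Filter.liminf (fun n => f n x) Filter.atTop =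
      ‖u x - c0‖ₑ ^ q / ENNReal.ofReal (d x) ^ q := by
    intro x
    apply Filter.Tendsto.liminf_eq
    have h1 : Filter.Tendsto (fun n => ‖u x - c (φ n)‖ₑ ^ q / ENNReal.ofReal (d x) ^ q)
        Filter.atTop (nhds (‖u x - c0‖ₑ ^ q / ENNReal.ofReal (d x) ^ q)) := by
      apply ENNReal.Tendsto.div_const
      · apply Filter.Tendsto.ennrpow_const
        exact (tendsto_const_nhds.sub hlim).enorm
      · right
        rw [ENNReal.ofReal_rpow_of_pos (hd0 x)]
        simp only [ne_eq, ENNReal.ofReal_eq_zero, not_le]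
        exact Real.rpow_pos_of_pos (hd0 x) q
    refine h1.congr' ?_
    filter_upwards [Filter.eventually_ge_atTop ⌈‖x‖⌉₊] with n hn
    have : x ∈ Metric.closedBall (0:E) ((φ n : ℕ) + 1 : ℝ) := by
      have h2 : ‖x‖ ≤ n := Nat.ceil_le.1 hn
      have h3 : (n:ℝ) ≤ φ n := by exact_mod_cast hφ.id_le n
      simp; linarith
    simp only [f, Set.indicator_of_mem this]
  have hfat := lintegral_liminf_le (μ := μ) (u := Filter.atTop) hfm
  simp_rw [hpt] at hfat
  refine hfat.trans ?_
  refine (Filter.liminf_le_liminf (v := fun _ => K * I) (Filter.Eventually.of_forall fun n => ?_)).trans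
    (le_of_eq (by simp))
  simp only [f]
  rw [lintegral_indicator Metric.isClosed_closedBall.measurableSet]
  exact hc (φ n)

end

lemma finish {E : Type*} [NormedAddCommGroup E] [NormedSpace ℝ E] [MeasurableSpace E] [BorelSpace E]
    (μ : Measure E) (q : ℝ) (hq : 1 < q) (d : E → ℝ) (hd0 : ∀ x, 0 < d x)
    (h : ∃ K : ℝ≥0∞, K ≠ ∞ ∧ ∀ u : E → ℂ, ContDiff ℝ 1 u → ∫⁻ x, ‖fderiv ℝ u x‖ₑ ^ q ∂μ ≠ ∞ →
      ∃ c : ℂ, ∫⁻ x, ‖u x - c‖ₑ ^ q / ENNReal.ofReal (d x) ^ q ∂μ ≤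
        K * ∫⁻ x, ‖fderiv ℝ u x‖ₑ ^ q ∂μ) :
    ∃ C : ℝ, 0 < C ∧ ∀ u : E → ℂ, ContDiff ℝ 1 u →
      Integrable (fun x => ‖fderiv ℝ u x‖ ^ q) μ →
      ∃ c : ℂ, (∫⁻ x, ENNReal.ofReal (‖u x - c‖ ^ q / d x ^ q) ∂μ) ≤
          ENNReal.ofReal (C ^ q * ∫ x, ‖fderiv ℝ u x‖ ^ q ∂μ) := by
  have hq0 : 0 < q := by linarith
  obtain ⟨K, hK, h⟩ := h
  refine ⟨(K.toReal + 1) ^ (1/q), by positivity, fun u hu hI => ?_⟩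
  have e1 : ∀ x, ENNReal.ofReal (‖fderiv ℝ u x‖ ^ q) = ‖fderiv ℝ u x‖ₑ ^ q := fun x => by
    rw [← ofReal_norm, ENNReal.ofReal_rpow_of_nonneg (norm_nonneg _) hq0.le]
  have e2 : ENNReal.ofReal (∫ x, ‖fderiv ℝ u x‖ ^ q ∂μ) = ∫⁻ x, ‖fderiv ℝ u x‖ₑ ^ q ∂μ := by
    rw [ofReal_integral_eq_lintegral_ofReal hI (Filter.Eventually.of_forall fun x => by positivity)]
    simp_rw [e1]
  obtain ⟨c, hc⟩ := h u hu (by rw [← e2]; exact ENNReal.ofReal_ne_top)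
  refine ⟨c, ?_⟩
  have e3 : ∀ x, ENNReal.ofReal (‖u x - c‖ ^ q / d x ^ q) =
      ‖u x - c‖ₑ ^ q / ENNReal.ofReal (d x) ^ q := fun x => by
    have := hd0 x
    rw [ENNReal.ofReal_div_of_pos (by positivity), ← ENNReal.ofReal_rpow_of_pos this,
      ← ENNReal.ofReal_rpow_of_nonneg (norm_nonneg _) hq0.le, ofReal_norm]
  simp_rw [e3]
  refine hc.trans ?_
  rw [ENNReal.ofReal_mul (by positivity), e2]
  gcongr
  rw [← Real.rpow_mul (by positivity), one_div, inv_mul_cancel₀ hq0.ne', Real.rpow_one]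
  rw [ENNReal.le_ofReal_iff_toReal_le hK (by positivity)]
  linarith



/-- Lemma 3.9 (weighted Hardy-type inequality): with
`d_q(x) = (1+|x|²)^{1/2}` for `q ≠ N` and `d_q(x) = (1+|x|²)^{1/2} log (2+|x|²)^{1/2}`
for `q = N`, every `C¹` function `u` with `∇u ∈ L^q(ℝ^N)` admits a constant `c` with
`∫ |u - c|^q / d_q^q ≤ C^q ∫ ‖∇u‖^q`. -/
theorem stmt_7 (N : ℕ) (hN : 1 ≤ N) (q : ℝ) (hq : 1 < q) :
    ∃ C : ℝ, 0 < C ∧ ∀ u : EuclideanSpace ℝ (Fin N) → ℂ, ContDiff ℝ 1 u →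
      Integrable (fun x => ‖fderiv ℝ u x‖ ^ q) →
      ∃ c : ℂ,
        (∫⁻ x : EuclideanSpace ℝ (Fin N),
            ENNReal.ofReal (‖u x - c‖ ^ q /
              ((if q = (N : ℝ) then
                  Real.sqrt (1 + ‖x‖ ^ 2) * Real.log (Real.sqrt (2 + ‖x‖ ^ 2))
                else Real.sqrt (1 + ‖x‖ ^ 2)) ^ q))) ≤
          ENNReal.ofReal (C ^ q * ∫ x : EuclideanSpace ℝ (Fin N), ‖fderiv ℝ u x‖ ^ q) := by
  have hq0 : 0 < q := by linarith
  have hfin : Module.finrank ℝ (EuclideanSpace ℝ (Fin N)) = N := by simp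
  by_cases hqN : q = (N : ℝ)
  · simp only [if_pos hqN]
    set lam := Real.log (Real.sqrt 2) with hlamd
    have hlam : 0 < lam := Real.log_pos (by
      rw [Real.lt_sqrt (by norm_num)]; norm_num)
    have hl : ∀ r : ℝ, lam ≤ Real.log (Real.sqrt (2 + r ^ 2)) := fun r => by
      apply Real.log_le_log (by positivity)
      apply Real.sqrt_le_sqrt
      nlinarith [sq_nonneg r]
    have hD : ∀ r : ℝ, 1 ≤ Real.sqrt (1 + r ^ 2) := fun r => by
      rw [Real.one_le_sqrt]; nlinarith [sq_nonneg r]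
    have hd0 : ∀ x : EuclideanSpace ℝ (Fin N), lam ≤
        Real.sqrt (1 + ‖x‖ ^ 2) * Real.log (Real.sqrt (2 + ‖x‖ ^ 2)) := fun x => by
      nlinarith [hl ‖x‖, hD ‖x‖]
    apply finish volume q hq
      (fun x => Real.sqrt (1 + ‖x‖ ^ 2) * Real.log (Real.sqrt (2 + ‖x‖ ^ 2)))
      (fun x => hlam.trans_le (hd0 x))
    obtain ⟨K, hK, h⟩ := case_eq (volume : Measure (EuclideanSpace ℝ (Fin N))) q hq
      (by rw [hfin, hqN]) _ lam hlam (lam / (1 + lam)) (by positivity) hd0 (by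
        intro x hx
        have h1 : ‖x‖ ≤ Real.sqrt (1 + ‖x‖ ^ 2) := Real.le_sqrt_of_sq_le (by linarith)
        have h2 : Real.log ‖x‖ ≤ Real.log (Real.sqrt (2 + ‖x‖ ^ 2)) :=
          Real.log_le_log (by linarith) (Real.le_sqrt_of_sq_le (by linarith))
        have h3 := hl ‖x‖
        have h4 : lam / (1 + lam) * (1 + Real.log ‖x‖) ≤ Real.log (Real.sqrt (2 + ‖x‖ ^ 2)) := by
          rw [div_mul_eq_mul_div, div_le_iff₀ (by positivity)]
          nlinarith
        have h5 : 0 < Real.log ‖x‖ := Real.log_pos hx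
        calc _ = ‖x‖ * (lam / (1 + lam) * (1 + Real.log ‖x‖)) := by ring
          _ ≤ _ := by gcongr)
    exact ⟨K, hK, fun u hu _ => h u hu⟩
  · simp only [if_neg hqN]
    have hd0 : ∀ x : EuclideanSpace ℝ (Fin N), 0 < Real.sqrt (1 + ‖x‖ ^ 2) := fun x => by positivity
    have hd : ∀ x : EuclideanSpace ℝ (Fin N), ‖x‖ ≤ Real.sqrt (1 + ‖x‖ ^ 2) := fun x =>
      Real.le_sqrt_of_sq_le (by linarith)
    apply finish volume q hq (fun x => Real.sqrt (1 + ‖x‖ ^ 2)) hd0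
    rcases lt_or_gt_of_ne hqN with hlt | hgt
    · haveI : Nontrivial (EuclideanSpace ℝ (Fin N)) := by
        apply Module.nontrivial_of_finrank_pos (R := ℝ)
        rw [hfin]; omega
      apply case_lt volume q hq (by rw [hfin]; exact hlt) _ (by fun_prop) hd0 hd
      intro x hx
      rw [Real.sqrt_le_left (by norm_num)]
      nlinarith [norm_nonneg x]
    · obtain ⟨K, hK, h⟩ := case_gt (volume : Measure (EuclideanSpace ℝ (Fin N))) q hq
        (by rw [hfin]; exact hgt) _ hd
      exact ⟨K, hK, fun u hu _ => h u hu⟩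
end
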